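/- arXiv:1901.01385 — 2 statements merged into one kernel-verified Lean document; each statement's English description precedes it below -/
import Mathlib

section
/- Let K be an algebraically closed field and n ≥ 1. Every effective regular action of the n-dimensional torus T_n = (K^×)^n on the free associative algebra F_n = FreeAlgebra K (Fin n) is linearizable. -/
open FreeAlgebra

/-- A torus action `σ` of `(Kˣ)^r` on the free algebra is *regular* if the image of each
generator depends on `t` as a Laurent polynomial with coefficients in the free algebra. -/
def TorusActionIsRegular {K : Type} [Field K] {n r : ℕ}
    (σ : (Fin r → Kˣ) →* (FreeAlgebra K (Fin n) ≃ₐ[K] FreeAlgebra K (Fin n))) : Prop :=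
  ∀ i : Fin n, ∃ a : ((Fin r → ℤ) →₀ FreeAlgebra K (Fin n)),
    ∀ t : Fin r → Kˣ,
      σ t (ι K i) = a.sum fun m c => ((∏ j : Fin r, (t j) ^ (m j) : Kˣ) : K) • c

/-- A torus action on the free algebra is *linearizable* if some algebra automorphism `β`
conjugates it into an action mapping each generator into the linear span of the generators. -/
def TorusActionIsLinearizable {K : Type} [Field K] {n r : ℕ}
    (σ : (Fin r → Kˣ) →* (FreeAlgebra K (Fin n) ≃ₐ[K] FreeAlgebra K (Fin n))) : Prop :=
  ∃ β : FreeAlgebra K (Fin n) ≃ₐ[K] FreeAlgebra K (Fin n),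
    ∀ (t : Fin r → Kˣ) (i : Fin n),
      β.symm (σ t (β (ι K i))) ∈
        Submodule.span K (Set.range (ι K : Fin n → FreeAlgebra K (Fin n)))

/-!
Abelianizing gives an effective action on the polynomial ring in `n` variables, and effectiveness
provides `n` independent weights. Counting transcendence degrees, all vectors of weight zero are
algebraic over `K`, so they are zero or units. As the units of the polynomial ring are scalars, the
projection to weight zero is an algebra homomorphism, and composing it with any point yields a
fixed point of the torus.

With the fixed point moved to the origin, the filtration by the order of vanishing there is stable
under the torus, hence graded by the weights. Choose weight vectors `f x` vanishing at the origin
whose linear parts form a basis. Up to a linear change of coordinates, the endomorphism sending the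
generators to the `f x` is the identity to first order, so it is injective. A torus element fixing
every `f x` acts unipotently and diagonalizably, hence trivially, so the weights of the `f x` are
independent. Every weight vector is approximated to any order by noncommutative polynomials in the
`f x` of the same weight. By independence all words in the `f x` of a given weight have the same
length, so the approximations are eventually constant and the `f x` generate the free algebra.
-/

section LinearAlgebra

variable {K V ι κ : Type*} [Field K] [AddCommGroup V] [Module K V]

theorem exists_basis_mem_of_span_eq_top (b : Module.Basis ι K V) {s : Set V}
    (hs : Submodule.span K s = ⊤) : ∃ b' : Module.Basis ι K V, ∀ i, b' i ∈ s := by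
  let b' := Module.Basis.ofSpan hs.ge
  refine ⟨b'.reindex (b'.indexEquiv b), fun i => ?_⟩
  rw [Module.Basis.reindex_apply]
  exact Module.Basis.ofSpan_subset hs.ge ⟨_, rfl⟩

/-- Characters with vector coefficients: with `N = ⊥` and Dedekind's lemma for `f`, this is the
independence of weight vectors of different weights. -/
theorem mem_of_forall_sum_smul_mem {G : Type*} {f : κ → G → K} (hf : LinearIndependent K f)
    {N : Submodule K V} {s : Finset κ} {v : κ → V} (h : ∀ g, ∑ i ∈ s, f i g • v i ∈ N)
    {i : κ} (hi : i ∈ s) : v i ∈ N := by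
  by_contra hv
  obtain ⟨φ, hφv, hφN⟩ := Submodule.exists_le_ker_of_notMem hv
  refine hφv (linearIndependent_iff'.mp hf s (fun j => φ (v j)) ?_ i hi)
  ext g
  simpa [mul_comm] using hφN (h g)

variable [Fintype ι]

theorem exists_int_ne_zero_dotProduct_eq_zero {S : Set (ι → ℤ)}
    (hS : Submodule.span ℚ ((fun m i => (m i : ℚ)) '' S) ≠ ⊤) :
    ∃ l : ι → ℤ, l ≠ 0 ∧ ∀ m ∈ S, m ⬝ᵥ l = 0 := by
  classical
  obtain ⟨φ, hφ, hker⟩ := Submodule.exists_le_ker_of_lt_top _ (lt_top_iff_ne_top.mpr hS)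
  obtain ⟨b, hb⟩ := IsLocalization.exist_integer_multiples_of_finite (nonZeroDivisors ℤ)
    (fun j => φ (Pi.single j 1))
  choose l hl using hb
  simp only [eq_intCast, zsmul_eq_mul] at hl
  have hb0 : ((b : ℤ) : ℚ) ≠ 0 := by exact_mod_cast nonZeroDivisors.coe_ne_zero b
  refine ⟨l, ?_, fun m hm => ?_⟩
  · rintro rfl
    refine hφ (LinearMap.pi_ext' fun j => LinearMap.ext_ring ?_)
    simpa [hb0] using (hl j).symm
  · have hφm : ∑ j, (m j : ℚ) * φ (Pi.single j 1) = 0 := by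
      have h0 : φ (fun j => (m j : ℚ)) = 0 := hker (Submodule.subset_span ⟨m, hm, rfl⟩)
      rw [pi_eq_sum_univ' fun j => (m j : ℚ), map_sum] at h0
      simpa only [map_smul, smul_eq_mul] using h0
    suffices ((m ⬝ᵥ l : ℤ) : ℚ) = b * ∑ j, (m j : ℚ) * φ (Pi.single j 1) by
      rw [hφm, mul_zero] at this
      exact_mod_cast this
    simp only [dotProduct, Int.cast_sum, Int.cast_mul, hl, Finset.mul_sum, mul_left_comm]

theorem exists_linearIndependent_int_mem {S : Set (ι → ℤ)}
    (hS : ∀ l : ι → ℤ, l ≠ 0 → ∃ m ∈ S, m ⬝ᵥ l ≠ 0) :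
    ∃ d : ι → ι → ℤ, LinearIndependent ℤ d ∧ ∀ i, d i ∈ S := by
  have hspan : Submodule.span ℚ ((fun m i => (m i : ℚ)) '' S) = ⊤ := by
    by_contra hne
    obtain ⟨l, hl, hl0⟩ := exists_int_ne_zero_dotProduct_eq_zero hne
    obtain ⟨m, hm, hml⟩ := hS l hl
    exact hml (hl0 m hm)
  obtain ⟨b, hb⟩ := exists_basis_mem_of_span_eq_top (Pi.basisFun ℚ ι) hspan
  choose d hdS hdb using hb
  refine ⟨d, ?_, hdS⟩
  have hli := b.linearIndependent.restrict_scalars' ℤ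
  rw [← funext hdb] at hli
  exact LinearIndependent.of_comp ((Int.castAddHom ℚ).compLeft ι).toIntLinearMap hli

end LinearAlgebra

section Torus

variable {K ι : Type*} [Field K] [Fintype ι]

/-- The character `t ↦ ∏ i, t i ^ m i` of the torus `ι → Kˣ`, with values in `K` so that it acts on
`K`-modules and falls under Dedekind's lemma. -/
def torusCharacter (m : ι → ℤ) : (ι → Kˣ) →* K :=
  (Units.coeHom K).comp
    { toFun := fun t => ∏ i, t i ^ m i
      map_one' := by simp
      map_mul' := fun s t => by simp [mul_zpow, Finset.prod_mul_distrib] }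

theorem torusCharacter_apply (m : ι → ℤ) (t : ι → Kˣ) :
    torusCharacter m t = ((∏ i, t i ^ m i : Kˣ) : K) := rfl

@[simp]
theorem torusCharacter_zero : torusCharacter (K := K) (0 : ι → ℤ) = 1 := by
  ext t
  simp [torusCharacter_apply]

theorem torusCharacter_add (m m' : ι → ℤ) :
    torusCharacter (K := K) (m + m') = torusCharacter m * torusCharacter m' := by
  ext t
  simp [torusCharacter_apply, zpow_add, Finset.prod_mul_distrib]

theorem torusCharacter_mulSingle [DecidableEq ι] (m : ι → ℤ) (i : ι) (x : Kˣ) :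
    torusCharacter m (Pi.mulSingle i x) = ((x ^ m i : Kˣ) : K) := by
  rw [torusCharacter_apply, Finset.prod_eq_single i]
  · simp
  · intro j _ hj
    simp [Pi.mulSingle_eq_of_ne hj]
  · simp

theorem torusCharacter_zpow (m l : ι → ℤ) (x : Kˣ) :
    torusCharacter m (fun i => x ^ l i) = ((x ^ (m ⬝ᵥ l) : Kˣ) : K) := by
  simp only [torusCharacter_apply, dotProduct, ← zpow_mul, mul_comm (l _)]
  exact congrArg Units.val
    (map_prod (zpowersHom Kˣ x) (fun i => Multiplicative.ofAdd (m i * l i)) _).symm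

theorem exists_units_zpow_ne_one [Infinite K] {k : ℤ} (hk : k ≠ 0) : ∃ x : Kˣ, x ^ k ≠ 1 := by
  by_contra! h
  have hX : (Polynomial.X ^ (k.natAbs + 1) : Polynomial K) = Polynomial.X := by
    refine Polynomial.funext fun x => ?_
    rcases eq_or_ne x 0 with rfl | hx
    · simp
    · have hxk : x ^ k.natAbs = 1 :=
        congrArg Units.val (pow_natAbs_eq_one.mpr (h (Units.mk0 x hx)))
      simp [pow_succ, hxk]
  simpa [hk] using congrArg Polynomial.natDegree hX

theorem torusCharacter_injective [Infinite K] :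
    Function.Injective (torusCharacter : (ι → ℤ) → ((ι → Kˣ) →* K)) := by
  classical
  intro m m' h
  by_contra hne
  obtain ⟨i, hi⟩ := Function.ne_iff.mp hne
  obtain ⟨x, hx⟩ := exists_units_zpow_ne_one (K := K) (sub_ne_zero.mpr hi)
  have hmm' := DFunLike.congr_fun h (Pi.mulSingle i x)
  rw [torusCharacter_mulSingle, torusCharacter_mulSingle] at hmm'
  exact hx (by rw [zpow_sub, Units.ext hmm', mul_inv_cancel])

theorem linearIndependent_torusCharacter [Infinite K] :
    LinearIndependent K fun (m : ι → ℤ) (t : ι → Kˣ) => torusCharacter (K := K) m t :=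
  (linearIndependent_monoidHom (ι → Kˣ) K).comp _ torusCharacter_injective

theorem exists_ne_one_forall_torusCharacter_eq_one [Infinite K] {l : ι → ℤ} (hl : l ≠ 0) :
    ∃ u : ι → Kˣ, u ≠ 1 ∧ ∀ m : ι → ℤ, m ⬝ᵥ l = 0 → torusCharacter m u = 1 := by
  obtain ⟨j, hj⟩ := Function.ne_iff.mp hl
  obtain ⟨x, hx⟩ := exists_units_zpow_ne_one (K := K) hj
  refine ⟨fun i => x ^ l i, fun h => hx (congrFun h j), fun m hm => ?_⟩
  rw [torusCharacter_zpow, hm, zpow_zero, Units.val_one]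

theorem linearIndependent_of_torusCharacter_eq_one [Infinite K] {d : ι → ι → ℤ}
    (h : ∀ u : ι → Kˣ, (∀ i, torusCharacter (d i) u = 1) → u = 1) : LinearIndependent ℤ d := by
  classical
  refine Matrix.linearIndependent_rows_of_det_ne_zero (A := Matrix.of d) fun hdet => ?_
  obtain ⟨l, hl, hdl⟩ := Matrix.exists_mulVec_eq_zero_iff.mpr hdet
  obtain ⟨u, hu, hul⟩ := exists_ne_one_forall_torusCharacter_eq_one (K := K) hl
  exact hu (h u fun i => hul (d i) (congrFun hdl i))

end Torus

section GradedAlgebra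

open DirectSum

variable {R A G ι : Type*} [CommRing R] [DecidableEq G]

section NonUnits

variable [AddMonoid G] [CommRing A] [Algebra R A] (𝒜 : G → Submodule R A) [GradedAlgebra 𝒜]

theorem coe_decompose_mul_zero_of_isUnit (hunit : ∀ a ∈ 𝒜 0, a ≠ 0 → IsUnit a)
    (hzero : ∀ a, IsUnit a → a ∈ 𝒜 0) (a b : A) :
    (decompose 𝒜 (a * b) 0 : A) = decompose 𝒜 a 0 * decompose 𝒜 b 0 := by
  induction a using Decomposition.inductionOn 𝒜 with
  | zero => simp
  | add a a' iha iha' => simp [add_mul, iha, iha', -decompose_mul]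
  | @homogeneous i a =>
    induction b using Decomposition.inductionOn 𝒜 with
    | zero => simp
    | add b b' ihb ihb' => simp [mul_add, ihb, ihb', -decompose_mul, -decompose_coe]
    | @homogeneous j b =>
      have hab : (a * b : A) ∈ 𝒜 (i + j) := SetLike.mul_mem_graded a.2 b.2
      by_cases hi : i = 0
      · subst hi
        rw [coe_decompose_mul_of_left_mem_zero 𝒜 a.2, decompose_of_mem_same 𝒜 a.2]
      by_cases hj : j = 0
      · subst hj
        rw [coe_decompose_mul_of_right_mem_zero 𝒜 b.2, decompose_of_mem_same 𝒜 b.2]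
      rw [decompose_of_mem_ne 𝒜 a.2 hi, zero_mul]
      by_contra hne
      have hij : i + j = 0 := by
        by_contra h
        exact hne (decompose_of_mem_ne 𝒜 hab h)
      rw [decompose_of_mem_same 𝒜 (hij ▸ hab)] at hne
      have ha : (a : A) ∈ 𝒜 0 :=
        hzero _ (isUnit_of_mul_isUnit_left (hunit _ (hij ▸ hab) hne))
      exact left_ne_zero_of_mul hne ((decompose_of_mem_same 𝒜 ha).symm.trans
        (decompose_of_mem_ne 𝒜 a.2 hi))

theorem exists_algHom_apply_eq_coe_decompose_zero (hunit : ∀ a ∈ 𝒜 0, a ≠ 0 → IsUnit a)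
    (hzero : ∀ a, IsUnit a → a ∈ 𝒜 0) :
    ∃ φ : A →ₐ[R] A, ∀ a, φ a = decompose 𝒜 a 0 :=
  ⟨AlgHom.ofLinearMap (GradedAlgebra.proj 𝒜 0)
    (decompose_of_mem_same 𝒜 (SetLike.GradedOne.one_mem))
    (coe_decompose_mul_zero_of_isUnit 𝒜 hunit hzero), fun _ => rfl⟩

end NonUnits

theorem algebraicIndependent_of_linearIndependent_degree [AddCommMonoid G] [CommRing A]
    [IsDomain A] [Algebra R A] {𝒜 : G → Submodule R A} [GradedAlgebra 𝒜] {d : ι → G}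
    (hd : LinearIndependent ℕ d) {g : ι → A} (hg : ∀ i, g i ∈ 𝒜 (d i)) (hg0 : ∀ i, g i ≠ 0) :
    AlgebraicIndependent (SetLike.GradeZero.subalgebra 𝒜) g := by
  classical
  rw [algebraicIndependent_iff]
  intro p hp
  let monomialAt : (ι →₀ ℕ) → A := fun k => k.prod fun i e => g i ^ e
  have hdeg (k : ι →₀ ℕ) :
      ((p.coeff k : SetLike.GradeZero.subalgebra 𝒜) : A) * monomialAt k ∈
        𝒜 (Finsupp.linearCombination ℕ d k) := by
    have := SetLike.mul_mem_graded (A := 𝒜) (p.coeff k).2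
      (SetLike.prod_pow_mem_graded 𝒜 d g (F := k.support) k fun i _ => hg i)
    rwa [zero_add] at this
  ext k
  have hterm : ((p.coeff k : SetLike.GradeZero.subalgebra 𝒜) : A) * monomialAt k = 0 := by
    by_cases hk : k ∈ p.support
    · exact (iSupIndep_iff_finsetSum_eq_zero_imp_eq_zero _).mp
        ((Decomposition.isInternal 𝒜).submodule_iSupIndep.comp hd) _ _ (fun k _ => hdeg k) hp k hk
    · simp [MvPolynomial.notMem_support_iff.mp hk]
  have hk0 : monomialAt k ≠ 0 :=
    Finset.prod_ne_zero_iff.mpr fun i _ => pow_ne_zero _ (hg0 i)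
  simpa [hk0] using hterm

variable {K : Type*} [Field K]

theorem isAlgebraic_of_algebraicIndependent [CommRing A] [IsDomain A] [Algebra K A] [Finite ι]
    {S : Subalgebra K A} {g : ι → A} (hg : AlgebraicIndependent S g)
    (hA : Algebra.trdeg K A ≤ Nat.card ι) : Algebra.IsAlgebraic K S := by
  rw [← trdeg_eq_zero_iff]
  have hle : (Nat.card ι : Cardinal) ≤ Algebra.trdeg S A := by
    have hlift := hg.lift_cardinalMk_le_trdeg
    rwa [← Nat.cast_card, Cardinal.lift_natCast, Cardinal.nat_le_lift_iff] at hlift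
  have hadd := trdeg_add_eq K S (A := A)
  refine Cardinal.eq_of_add_eq_add_right (b := Nat.card ι) (le_antisymm ?_ ?_)
    (Cardinal.natCast_lt_aleph0)
  · rw [zero_add]
    exact (add_le_add_right hle _).trans (hadd.trans_le hA)
  · simp

theorem isUnit_of_mem_zero_of_linearIndependent_degree [AddCommMonoid G] [CommRing A]
    [IsDomain A] [Algebra K A] [Finite ι] {𝒜 : G → Submodule K A} [GradedAlgebra 𝒜]
    (hA : Algebra.trdeg K A ≤ Nat.card ι) {d : ι → G} (hd : LinearIndependent ℕ d)
    (h𝒜 : ∀ i, 𝒜 (d i) ≠ ⊥) {a : A} (ha : a ∈ 𝒜 0) (ha0 : a ≠ 0) : IsUnit a := by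
  choose g hg hg0 using fun i => (Submodule.ne_bot_iff _).mp (h𝒜 i)
  have := isAlgebraic_of_algebraicIndependent
    (algebraicIndependent_of_linearIndependent_degree hd hg hg0) hA
  let a' : SetLike.GradeZero.subalgebra 𝒜 := ⟨a, ha⟩
  have hint : IsIntegral K a' := (Algebra.IsAlgebraic.isAlgebraic a').isIntegral
  exact (hint.isUnit (Subtype.coe_ne_coe.mp ha0)).map (SetLike.GradeZero.subalgebra 𝒜).val

end GradedAlgebra

section TorusWeight

open DirectSum

variable {K ι A B : Type*} [Field K] [Fintype ι] [Ring A] [Algebra K A] [Ring B] [Algebra K B]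

section

variable (ρ : (ι → Kˣ) →* (A →ₐ[K] A))

/-- The vectors of weight `m` for an action of the torus `ι → Kˣ` on an algebra. -/
def torusWeightSpace (m : ι → ℤ) : Submodule K A :=
  ⨅ t, Module.End.eigenspace (ρ t).toLinearMap (torusCharacter m t)

variable {ρ}

theorem mem_torusWeightSpace {m : ι → ℤ} {v : A} :
    v ∈ torusWeightSpace ρ m ↔ ∀ t, ρ t v = torusCharacter m t • v := by
  simp [torusWeightSpace]

instance : SetLike.GradedMonoid (torusWeightSpace ρ) where
  one_mem := mem_torusWeightSpace.mpr fun t => by simp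
  mul_mem m m' v w hv hw := by
    rw [mem_torusWeightSpace] at *
    intro t
    rw [map_mul, hv, hw, torusCharacter_add, MonoidHom.mul_apply, smul_mul_smul_comm]

theorem iSup_torusWeightSpace_eq_top_of_adjoin {s : Set A} (hs : Algebra.adjoin K s = ⊤)
    (h : s ⊆ (⨆ m, torusWeightSpace ρ m : Submodule K A)) : ⨆ m, torusWeightSpace ρ m = ⊤ := by
  have hmul : (⨆ m, torusWeightSpace ρ m) * (⨆ m, torusWeightSpace ρ m) ≤
      ⨆ m, torusWeightSpace ρ m := by
    simp only [Submodule.iSup_mul, Submodule.mul_iSup, iSup_le_iff]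
    exact fun m m' => Submodule.mul_le.mpr fun v hv w hw =>
      Submodule.mem_iSup_of_mem _ (SetLike.mul_mem_graded hv hw)
  rw [eq_top_iff]
  intro a _
  have ha : a ∈ Algebra.adjoin K s := hs ▸ Algebra.mem_top
  induction ha using Algebra.adjoin_induction with
  | mem x hx => exact h hx
  | algebraMap c =>
    exact Submodule.mem_iSup_of_mem 0 (SetLike.algebraMap_mem_graded (torusWeightSpace ρ) c)
  | add x y _ _ hx hy => exact add_mem (hx trivial) (hy trivial)
  | mul x y _ _ hx hy => exact hmul (Submodule.mul_mem_mul (hx trivial) (hy trivial))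

theorem iSup_torusWeightSpace_eq_top_of_surjective {τ : (ι → Kˣ) →* (B →ₐ[K] B)}
    {φ : A →ₐ[K] B} (hφ : Function.Surjective φ) (hτ : ∀ t a, φ (ρ t a) = τ t (φ a))
    (hρ : ⨆ m, torusWeightSpace ρ m = ⊤) : ⨆ m, torusWeightSpace τ m = ⊤ := by
  have hle (m : ι → ℤ) : (torusWeightSpace ρ m).map φ.toLinearMap ≤ torusWeightSpace τ m := by
    rintro _ ⟨v, hv, rfl⟩
    refine mem_torusWeightSpace.mpr fun t => ?_
    rw [AlgHom.toLinearMap_apply, ← hτ, mem_torusWeightSpace.mp hv, map_smul]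
  have htop : (⊤ : Submodule K A).map φ.toLinearMap = ⊤ := by
    rw [Submodule.map_top]
    exact LinearMap.range_eq_top.mpr hφ
  rw [eq_top_iff, ← htop, ← hρ, Submodule.map_iSup]
  exact iSup_mono hle

theorem eq_one_of_forall_mem_torusWeightSpace (hinj : Function.Injective ρ)
    (hρ : ⨆ m, torusWeightSpace ρ m = ⊤) {u : ι → Kˣ}
    (hu : ∀ m, ∀ v ∈ torusWeightSpace ρ m, ρ u v = v) : u = 1 := by
  refine hinj (AlgHom.ext fun a => ?_)
  have ha : a ∈ ⨆ m, torusWeightSpace ρ m := hρ ▸ Submodule.mem_top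
  have hle : ⨆ m, torusWeightSpace ρ m ≤ LinearMap.eqLocus (ρ u).toLinearMap LinearMap.id :=
    iSup_le hu
  simpa using hle ha

variable [Infinite K]

theorem exists_linearIndependent_torusWeightSpace_ne_bot (hinj : Function.Injective ρ)
    (hρ : ⨆ m, torusWeightSpace ρ m = ⊤) :
    ∃ d : ι → ι → ℤ, LinearIndependent ℤ d ∧ ∀ i, torusWeightSpace ρ (d i) ≠ ⊥ := by
  refine exists_linearIndependent_int_mem (S := {m | torusWeightSpace ρ m ≠ ⊥}) fun l hl => ?_
  obtain ⟨u, hu, hul⟩ := exists_ne_one_forall_torusCharacter_eq_one (K := K) hl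
  by_contra! h
  refine hu (eq_one_of_forall_mem_torusWeightSpace hinj hρ fun m v hv => ?_)
  rcases eq_or_ne v 0 with rfl | hv0
  · exact map_zero _
  · have hm : torusWeightSpace ρ m ≠ ⊥ := (Submodule.ne_bot_iff _).mpr ⟨v, hv, hv0⟩
    rw [mem_torusWeightSpace.mp hv, hul m (h m hm), one_smul]

theorem mem_iSup_torusWeightSpace {v : A} {s : Finset (ι → ℤ)} {a : (ι → ℤ) → A}
    (h : ∀ t, ρ t v = ∑ m ∈ s, torusCharacter m t • a m) : v ∈ ⨆ m, torusWeightSpace ρ m := by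
  have ha {m : ι → ℤ} (hm : m ∈ s) : a m ∈ torusWeightSpace ρ m := by
    refine mem_torusWeightSpace.mpr fun u => sub_eq_zero.mp ?_
    refine mem_of_forall_sum_smul_mem linearIndependent_torusCharacter (N := (⊥ : Submodule K A))
      (v := fun m => ρ u (a m) - torusCharacter m u • a m) (fun t => ?_) hm
    have hmul : ρ u (ρ t v) = ρ (t * u) v := by rw [mul_comm, map_mul]; rfl
    rw [h, h] at hmul
    simpa [smul_sub, smul_smul, sub_eq_zero] using hmul
  have h1 : v = ∑ m ∈ s, a m := by simpa using h 1
  rw [h1]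
  exact sum_mem fun m hm => Submodule.mem_iSup_of_mem m (ha hm)

variable (ρ) in
theorem iSupIndep_torusWeightSpace : iSupIndep (torusWeightSpace ρ) := by
  rw [iSupIndep_iff_finsetSum_eq_zero_imp_eq_zero]
  intro s v hv hsum m hm
  refine mem_of_forall_sum_smul_mem linearIndependent_torusCharacter (N := (⊥ : Submodule K A))
    (fun t => ?_) hm
  rw [Submodule.mem_bot, ← map_zero (ρ t), ← hsum, map_sum]
  exact Finset.sum_congr rfl fun m hm => (mem_torusWeightSpace.mp (hv m hm) t).symm

/-- The grading of an algebra by the weights of a torus action whose weight vectors span. -/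
noncomputable abbrev torusGradedAlgebra (hρ : ⨆ m, torusWeightSpace ρ m = ⊤) :
    GradedAlgebra (torusWeightSpace ρ) :=
  { (inferInstance : SetLike.GradedMonoid (torusWeightSpace ρ)),
    (isInternal_submodule_of_iSupIndep_of_iSup_eq_top
      (iSupIndep_torusWeightSpace ρ) hρ).chooseDecomposition with }

end

variable {ρ : (ι → Kˣ) →* (A →ₐ[K] A)} [Decomposition (torusWeightSpace ρ)]

theorem coe_decompose_torus_apply (t : ι → Kˣ) (v : A) (m : ι → ℤ) :
    (decompose (torusWeightSpace ρ) (ρ t v) m : A) =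
      torusCharacter m t • (decompose (torusWeightSpace ρ) v m : A) := by
  induction v using Decomposition.inductionOn (torusWeightSpace ρ) with
  | zero => simp
  | add v w hv hw => simp [hv, hw]
  | @homogeneous m' v =>
    have hv := Submodule.smul_mem _ (torusCharacter m' t) v.2
    rw [mem_torusWeightSpace.mp v.2]
    rcases eq_or_ne m' m with rfl | hm
    · rw [decompose_of_mem_same _ hv, decompose_of_mem_same _ v.2]
    · rw [decompose_of_mem_ne _ hv hm, decompose_of_mem_ne _ v.2 hm, smul_zero]

theorem isHomogeneous_of_forall_map_mem [Infinite K] {N : Submodule K A}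
    (hN : ∀ t, ∀ v ∈ N, ρ t v ∈ N) : SetLike.IsHomogeneous (torusWeightSpace ρ) N := by
  classical
  intro m v hv
  by_cases hm : m ∈ (decompose (torusWeightSpace ρ) v).support
  · refine mem_of_forall_sum_smul_mem linearIndependent_torusCharacter
      (v := fun m => (decompose (torusWeightSpace ρ) v m : A)) (fun t => ?_) hm
    convert hN t v hv using 1
    conv_rhs => rw [← sum_support_decompose (torusWeightSpace ρ) v, map_sum]
    exact Finset.sum_congr rfl fun m _ => (mem_torusWeightSpace.mp (Subtype.prop _) t).symm
  · simp [DFinsupp.notMem_support_iff.mp hm]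

end TorusWeight

section OrderFiltration

variable {R X : Type*} [CommRing R]

theorem basisFreeMonoid_one : basisFreeMonoid R X 1 = 1 :=
  (equivMonoidAlgebraFreeMonoid (R := R) (X := X)).symm.map_one

theorem basisFreeMonoid_mul (v w : FreeMonoid X) :
    basisFreeMonoid R X (v * w) = basisFreeMonoid R X v * basisFreeMonoid R X w := by
  change equivMonoidAlgebraFreeMonoid.symm (MonoidAlgebra.of R _ (v * w)) = _
  rw [map_mul, map_mul]
  rfl

theorem basisFreeMonoid_of (x : X) : basisFreeMonoid R X (FreeMonoid.of x) = ι R x := by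
  change equivMonoidAlgebraFreeMonoid.symm (MonoidAlgebra.of R _ (FreeMonoid.of x)) = _
  rw [AlgEquiv.symm_apply_eq]
  simp [equivMonoidAlgebraFreeMonoid]

variable (R X) in
/-- The elements of the free algebra all of whose monomials have length at least `k`. -/
def orderFiltration (k : ℕ) : Submodule R (FreeAlgebra R X) :=
  Submodule.span R (basisFreeMonoid R X '' {w | k ≤ w.length})

variable {k : ℕ} {v : FreeAlgebra R X} {θ : FreeAlgebra R X →ₐ[R] FreeAlgebra R X}

theorem mem_orderFiltration :
    v ∈ orderFiltration R X k ↔ ∀ w, (basisFreeMonoid R X).repr v w ≠ 0 → k ≤ w.length := by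
  rw [orderFiltration, Module.Basis.mem_span_image]
  simp [Set.subset_def]

theorem basisFreeMonoid_mem_orderFiltration {w : FreeMonoid X} (h : k ≤ w.length) :
    basisFreeMonoid R X w ∈ orderFiltration R X k :=
  Submodule.subset_span ⟨w, h, rfl⟩

theorem orderFiltration_antitone : Antitone (orderFiltration R X) := fun _ _ h =>
  Submodule.span_mono (Set.image_mono fun _ hw => h.trans hw)

variable (v) in
theorem mem_orderFiltration_zero : v ∈ orderFiltration R X 0 := by
  simp [mem_orderFiltration]

theorem eq_zero_of_forall_mem_orderFiltration (h : ∀ k, v ∈ orderFiltration R X k) : v = 0 := by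
  rw [← (basisFreeMonoid R X).repr.map_eq_zero_iff]
  ext w
  by_contra hw
  exact absurd (mem_orderFiltration.mp (h (w.length + 1)) w hw) (by simp)

theorem ι_mem_orderFiltration (x : X) : ι R x ∈ orderFiltration R X 1 := by
  rw [← basisFreeMonoid_of]
  exact basisFreeMonoid_mem_orderFiltration (by simp)

theorem mul_mem_orderFiltration {j k : ℕ} {v w : FreeAlgebra R X}
    (hv : v ∈ orderFiltration R X j) (hw : w ∈ orderFiltration R X k) :
    v * w ∈ orderFiltration R X (j + k) := by
  have h : orderFiltration R X j * orderFiltration R X k ≤ orderFiltration R X (j + k) := by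
    rw [orderFiltration, orderFiltration, Submodule.span_mul_span, Submodule.span_le]
    rintro _ ⟨_, ⟨a, ha, rfl⟩, _, ⟨b, hb, rfl⟩, rfl⟩
    simp only [← basisFreeMonoid_mul]
    refine basisFreeMonoid_mem_orderFiltration ?_
    rw [FreeMonoid.length_mul]
    exact add_le_add ha hb
  exact h (Submodule.mul_mem_mul hv hw)

theorem map_mem_orderFiltration (hθ : ∀ x, θ (ι R x) ∈ orderFiltration R X 1)
    (hv : v ∈ orderFiltration R X k) : θ v ∈ orderFiltration R X k := by
  have hword (w : FreeMonoid X) : θ (basisFreeMonoid R X w) ∈ orderFiltration R X w.length := by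
    induction w using FreeMonoid.inductionOn' with
    | one => exact mem_orderFiltration_zero _
    | of_mul x w ih =>
      rw [basisFreeMonoid_mul, basisFreeMonoid_of, map_mul, FreeMonoid.length_mul,
        FreeMonoid.length_of]
      exact mul_mem_orderFiltration (hθ x) ih
  refine (Submodule.span_le (p := (orderFiltration R X k).comap θ.toLinearMap)).mpr ?_ hv
  rintro _ ⟨w, hw, rfl⟩
  exact orderFiltration_antitone hw (hword w)

theorem algebraMapInv_eq_repr_one (v : FreeAlgebra R X) :
    algebraMapInv v = (basisFreeMonoid R X).repr v 1 := by
  refine DFunLike.congr_fun ((basisFreeMonoid R X).ext fun w => ?_ :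
    (algebraMapInv : FreeAlgebra R X →ₐ[R] R).toLinearMap = (basisFreeMonoid R X).coord 1) v
  classical
  rw [Module.Basis.coord_apply, Module.Basis.repr_self_apply]
  induction w using FreeMonoid.casesOn with
  | one => simp [basisFreeMonoid_one]
  | of_mul x w =>
    have hne : FreeMonoid.of x * w ≠ 1 := fun h => by simpa using congrArg FreeMonoid.length h
    simp [hne, basisFreeMonoid_mul, basisFreeMonoid_of, algebraMapInv]

theorem mem_orderFiltration_one_of_algebraMapInv_eq_zero (hv : algebraMapInv v = 0) :
    v ∈ orderFiltration R X 1 := by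
  refine mem_orderFiltration.mpr fun w hw => Nat.one_le_iff_ne_zero.mpr fun h => hw ?_
  rw [FreeMonoid.length_eq_zero.mp h, ← algebraMapInv_eq_repr_one, hv]

/-- An endomorphism of the free algebra is unipotent if it is the identity on generators up to
monomials of length at least two. It is then injective, and surjective up to any order. -/
def IsUnipotent (θ : FreeAlgebra R X →ₐ[R] FreeAlgebra R X) : Prop :=
  ∀ x, θ (ι R x) - ι R x ∈ orderFiltration R X 2

namespace IsUnipotent

theorem map_ι_mem (hθ : IsUnipotent θ) (x : X) : θ (ι R x) ∈ orderFiltration R X 1 :=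
  ((orderFiltration R X 1).sub_mem_iff_left (ι_mem_orderFiltration x)).mp
    (orderFiltration_antitone one_le_two (hθ x))

theorem map_basisFreeMonoid_sub_mem (hθ : IsUnipotent θ) (w : FreeMonoid X) :
    θ (basisFreeMonoid R X w) - basisFreeMonoid R X w ∈
      orderFiltration R X (w.length + 1) := by
  induction w using FreeMonoid.inductionOn' with
  | one => simp [basisFreeMonoid_one]
  | of_mul x w ih =>
    have hθw := map_mem_orderFiltration hθ.map_ι_mem
      (basisFreeMonoid_mem_orderFiltration (R := R) (le_refl w.length))
    have hleibniz : θ (ι R x) * θ (basisFreeMonoid R X w) - ι R x * basisFreeMonoid R X w =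
        (θ (ι R x) - ι R x) * θ (basisFreeMonoid R X w) +
          ι R x * (θ (basisFreeMonoid R X w) - basisFreeMonoid R X w) := by
      noncomm_ring
    rw [basisFreeMonoid_mul, basisFreeMonoid_of, map_mul, FreeMonoid.length_mul,
      FreeMonoid.length_of, hleibniz]
    refine add_mem ?_ ?_
    · rw [add_right_comm, one_add_one_eq_two]
      exact mul_mem_orderFiltration (hθ x) hθw
    · rw [add_assoc]
      exact mul_mem_orderFiltration (ι_mem_orderFiltration x) ih

theorem map_sub_mem (hθ : IsUnipotent θ) (hv : v ∈ orderFiltration R X k) :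
    θ v - v ∈ orderFiltration R X (k + 1) := by
  refine (Submodule.span_le (p := (orderFiltration R X (k + 1)).comap
    (θ.toLinearMap - LinearMap.id))).mpr ?_ hv
  rintro _ ⟨w, hw, rfl⟩
  exact orderFiltration_antitone (Nat.succ_le_succ hw) (hθ.map_basisFreeMonoid_sub_mem w)

theorem mem_of_map_mem (hθ : IsUnipotent θ) (hv : θ v ∈ orderFiltration R X k) :
    v ∈ orderFiltration R X k := by
  suffices h : ∀ j ≤ k, v ∈ orderFiltration R X j from h k le_rfl
  intro j hj
  induction j with
  | zero => exact mem_orderFiltration_zero v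
  | succ j ih =>
    exact ((orderFiltration R X (j + 1)).sub_mem_iff_right (orderFiltration_antitone hj hv)).mp
      (hθ.map_sub_mem (ih (Nat.le_of_succ_le hj)))

theorem injective (hθ : IsUnipotent θ) : Function.Injective θ :=
  (injective_iff_map_eq_zero θ).mpr fun _ hv =>
    eq_zero_of_forall_mem_orderFiltration fun _ => hθ.mem_of_map_mem (hv ▸ zero_mem _)

theorem exists_sub_map_mem (hθ : IsUnipotent θ) (v : FreeAlgebra R X) (k : ℕ) :
    ∃ p, v - θ p ∈ orderFiltration R X k := by
  induction k with
  | zero => exact ⟨0, mem_orderFiltration_zero _⟩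
  | succ k ih =>
    obtain ⟨p, hp⟩ := ih
    refine ⟨p + (v - θ p), ?_⟩
    rw [map_add, ← sub_sub, ← neg_sub, neg_mem_iff]
    exact hθ.map_sub_mem hp

theorem map_eq_of_map_eq_smul {K : Type*} [Field K] {θ : FreeAlgebra K X →ₐ[K] FreeAlgebra K X}
    (hθ : IsUnipotent θ) {c : K} {v : FreeAlgebra K X} (hv : θ v = c • v) : θ v = v := by
  rcases eq_or_ne c 1 with rfl | hc
  · rw [hv, one_smul]
  suffices v = 0 by rw [this, map_zero]
  refine eq_zero_of_forall_mem_orderFiltration fun k => ?_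
  induction k with
  | zero => exact mem_orderFiltration_zero v
  | succ k ih =>
    have hsub : θ v - v = (c - 1) • v := by rw [hv, sub_smul, one_smul]
    exact (Submodule.smul_mem_iff _ (sub_ne_zero.mpr hc)).mp (hsub ▸ hθ.map_sub_mem ih)

end IsUnipotent

end OrderFiltration

section Abelianization

variable {R X : Type*} [CommRing R]

/-- The number of occurrences of each letter in a word, i.e. its multidegree. -/
noncomputable def letterCount (w : FreeMonoid X) : X →₀ ℕ :=
  (FreeMonoid.lift (fun x => Multiplicative.ofAdd (Finsupp.single x 1)) w).toAdd

@[simp]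
theorem letterCount_one : letterCount (1 : FreeMonoid X) = 0 := by
  simp [letterCount]

@[simp]
theorem letterCount_of (x : X) : letterCount (FreeMonoid.of x) = Finsupp.single x 1 := by
  simp [letterCount]

@[simp]
theorem letterCount_mul (v w : FreeMonoid X) :
    letterCount (v * w) = letterCount v + letterCount w := by
  simp [letterCount]

theorem degree_letterCount (w : FreeMonoid X) : (letterCount w).degree = w.length := by
  induction w using FreeMonoid.inductionOn' with
  | one => simp
  | of_mul x w ih => simp [ih]

theorem eq_of_letterCount_eq {v w : FreeMonoid X} (h : letterCount v = letterCount w)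
    (hw : w.length ≤ 1) : v = w := by
  have hlen : v.length = w.length := by rw [← degree_letterCount, h, degree_letterCount]
  rcases Nat.le_one_iff_eq_zero_or_eq_one.mp hw with hw | hw
  · rw [FreeMonoid.length_eq_zero.mp hw, FreeMonoid.length_eq_zero.mp (hlen.trans hw)]
  · obtain ⟨x, rfl⟩ := FreeMonoid.length_eq_one.mp (hlen.trans hw)
    obtain ⟨y, rfl⟩ := FreeMonoid.length_eq_one.mp hw
    rw [letterCount_of, letterCount_of, Finsupp.single_left_inj one_ne_zero] at h
    rw [h]

variable (R X) in
/-- The abelianization map from the free algebra to the polynomial ring. -/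
noncomputable def toMvPolynomial : FreeAlgebra R X →ₐ[R] MvPolynomial X R :=
  lift R MvPolynomial.X

@[simp]
theorem toMvPolynomial_ι (x : X) : toMvPolynomial R X (ι R x) = MvPolynomial.X x :=
  lift_ι_apply _ x

theorem toMvPolynomial_surjective : Function.Surjective (toMvPolynomial R X) := by
  rw [← AlgHom.range_eq_top, eq_top_iff, ← MvPolynomial.adjoin_range_X, Algebra.adjoin_le_iff]
  rintro _ ⟨x, rfl⟩
  exact ⟨ι R x, toMvPolynomial_ι x⟩

theorem aeval_toMvPolynomial (θ : FreeAlgebra R X →ₐ[R] FreeAlgebra R X) (v : FreeAlgebra R X) :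
    MvPolynomial.aeval (fun x => toMvPolynomial R X (θ (ι R x))) (toMvPolynomial R X v) =
      toMvPolynomial R X (θ v) := by
  suffices h : (MvPolynomial.aeval fun x => toMvPolynomial R X (θ (ι R x))).comp
      (toMvPolynomial R X) = (toMvPolynomial R X).comp θ from DFunLike.congr_fun h v
  ext x
  simp

/-- The endomorphism of the polynomial ring induced by an endomorphism of the free algebra. -/
noncomputable def abelianize :
    (FreeAlgebra R X →ₐ[R] FreeAlgebra R X) →* (MvPolynomial X R →ₐ[R] MvPolynomial X R) where
  toFun θ := MvPolynomial.aeval fun x => toMvPolynomial R X (θ (ι R x))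
  map_one' := by
    ext
    simp
  map_mul' θ θ' := MvPolynomial.algHom_ext fun x => by
    rw [AlgHom.mul_apply, MvPolynomial.aeval_X, MvPolynomial.aeval_X, aeval_toMvPolynomial,
      AlgHom.mul_apply]

theorem abelianize_toMvPolynomial (θ : FreeAlgebra R X →ₐ[R] FreeAlgebra R X)
    (v : FreeAlgebra R X) :
    abelianize θ (toMvPolynomial R X v) = toMvPolynomial R X (θ v) :=
  aeval_toMvPolynomial θ v

theorem toMvPolynomial_basisFreeMonoid (w : FreeMonoid X) :
    toMvPolynomial R X (basisFreeMonoid R X w) = MvPolynomial.monomial (letterCount w) 1 := by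
  induction w using FreeMonoid.inductionOn' with
  | one => simp [basisFreeMonoid_one]
  | of_mul x w ih =>
    rw [basisFreeMonoid_mul, basisFreeMonoid_of, map_mul, ih, toMvPolynomial_ι, MvPolynomial.X,
      MvPolynomial.monomial_mul, one_mul, letterCount_mul, letterCount_of]

theorem coeff_toMvPolynomial_letterCount (v : FreeAlgebra R X) {w : FreeMonoid X}
    (hw : w.length ≤ 1) :
    (toMvPolynomial R X v).coeff (letterCount w) = (basisFreeMonoid R X).repr v w := by
  classical
  refine DFunLike.congr_fun ((basisFreeMonoid R X).ext fun w' => ?_ :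
    (MvPolynomial.lcoeff R (letterCount w)).comp (toMvPolynomial R X).toLinearMap =
      (basisFreeMonoid R X).coord w) v
  have hiff : letterCount w' = letterCount w ↔ w' = w :=
    ⟨fun h => eq_of_letterCount_eq h hw, congrArg letterCount⟩
  simp [toMvPolynomial_basisFreeMonoid, MvPolynomial.coeff_monomial, Finsupp.single_apply, hiff]

theorem sub_mem_orderFiltration_two_of_toMvPolynomial_eq {v w : FreeAlgebra R X}
    (h : toMvPolynomial R X v = toMvPolynomial R X w) : v - w ∈ orderFiltration R X 2 := by
  refine mem_orderFiltration.mpr fun u hu => ?_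
  by_contra! hlt
  refine hu ?_
  rw [← coeff_toMvPolynomial_letterCount _ (Nat.le_of_lt_succ hlt), map_sub, h, sub_self,
    MvPolynomial.coeff_zero]

variable (R X) in
/-- The coefficients of the monomials of length one of an element of the free algebra. -/
noncomputable def linearPart : FreeAlgebra R X →ₗ[R] X →₀ R :=
  Finsupp.lcomapDomain FreeMonoid.of FreeMonoid.of_injective ∘ₗ
    (basisFreeMonoid R X).repr.toLinearMap

theorem linearPart_apply (v : FreeAlgebra R X) (x : X) :
    linearPart R X v x = (basisFreeMonoid R X).repr v (FreeMonoid.of x) := rfl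

theorem linearPart_ι (x : X) : linearPart R X (ι R x) = Finsupp.single x 1 := by
  ext y
  rw [linearPart_apply, ← basisFreeMonoid_of, Module.Basis.repr_self]
  classical
  simp [Finsupp.single_apply, FreeMonoid.of_injective.eq_iff]

theorem mem_orderFiltration_two_of_linearPart_eq_zero {v : FreeAlgebra R X}
    (hv : v ∈ orderFiltration R X 1) (hlin : linearPart R X v = 0) :
    v ∈ orderFiltration R X 2 := by
  refine mem_orderFiltration.mpr fun w hw => ?_
  refine (Nat.lt_of_le_of_ne (mem_orderFiltration.mp hv w hw) fun h => hw ?_)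
  obtain ⟨x, rfl⟩ := FreeMonoid.length_eq_one.mp h.symm
  rw [← linearPart_apply, hlin, Finsupp.zero_apply]

end Abelianization

section Coordinates

open DirectSum

variable {R X A : Type*} [CommRing R] [Ring A] [Algebra R A]

/-- The order filtration carried by an algebra `A` along an isomorphism `γ` of the free algebra
with `A`, which is thought of as a system of coordinates on `A`. -/
def coordinateFiltration (γ : FreeAlgebra R X ≃ₐ[R] A) (k : ℕ) : Submodule R A :=
  (orderFiltration R X k).comap γ.symm.toLinearMap

theorem mem_coordinateFiltration {γ : FreeAlgebra R X ≃ₐ[R] A} {k : ℕ} {a : A} :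
    a ∈ coordinateFiltration γ k ↔ γ.symm a ∈ orderFiltration R X k := Iff.rfl

theorem coordinateFiltration_trans {L : FreeAlgebra R X ≃ₐ[R] FreeAlgebra R X}
    (hL : ∀ x, L (ι R x) ∈ orderFiltration R X 1)
    (hL' : ∀ x, L.symm (ι R x) ∈ orderFiltration R X 1) (γ : FreeAlgebra R X ≃ₐ[R] A) :
    coordinateFiltration (L.trans γ) = coordinateFiltration γ := by
  ext k a
  refine ⟨fun ha => ?_, fun ha => map_mem_orderFiltration (θ := L.symm) hL' ha⟩
  simpa [mem_coordinateFiltration] using map_mem_orderFiltration (θ := (L : _ →ₐ[R] _)) hL ha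

theorem map_mem_coordinateFiltration {γ : FreeAlgebra R X ≃ₐ[R] A} {φ : A →ₐ[R] A}
    (hφ : ∀ a, algebraMapInv (γ.symm (φ a)) = algebraMapInv (γ.symm a)) {k : ℕ} {a : A}
    (ha : a ∈ coordinateFiltration γ k) : φ a ∈ coordinateFiltration γ k := by
  have hι (x : X) : γ.symm (φ (γ (ι R x))) ∈ orderFiltration R X 1 :=
    mem_orderFiltration_one_of_algebraMapInv_eq_zero <| by
      rw [hφ, AlgEquiv.symm_apply_apply]
      simp [algebraMapInv]
  simpa [mem_coordinateFiltration] using map_mem_orderFiltration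
    (θ := (γ.symm : A →ₐ[R] _).comp (φ.comp (γ : _ →ₐ[R] A))) hι ha

theorem exists_algEquiv_algebraMapInv_symm_eq (ε : FreeAlgebra R X →ₐ[R] R) :
    ∃ γ : FreeAlgebra R X ≃ₐ[R] FreeAlgebra R X, ∀ v, algebraMapInv (γ.symm v) = ε v := by
  let γ : FreeAlgebra R X ≃ₐ[R] FreeAlgebra R X :=
    AlgEquiv.ofAlgHom (lift R fun x => ι R x - algebraMap R _ (ε (ι R x)))
      (lift R fun x => ι R x + algebraMap R _ (ε (ι R x))) (by ext; simp) (by ext; simp)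
  suffices h : algebraMapInv.comp (γ.symm : _ →ₐ[R] FreeAlgebra R X) = ε from
    ⟨γ, DFunLike.congr_fun h⟩
  ext x
  simp [γ, algebraMapInv]

section LinearChange

variable {V : Type*} [AddCommGroup V] [Module R V]

theorem equivFreeAlgebra_ι_eq_linearCombination (b : Module.Basis X R V) (v : V) :
    TensorAlgebra.equivFreeAlgebra b (TensorAlgebra.ι R v) =
      Finsupp.linearCombination R (ι R) (b.repr v) := by
  refine DFunLike.congr_fun (b.ext fun x => ?_ :
    (TensorAlgebra.equivFreeAlgebra b).toLinearMap ∘ₗ TensorAlgebra.ι R =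
      Finsupp.linearCombination R (ι R) ∘ₗ b.repr.toLinearMap) v
  simp

theorem linearCombination_ι_mem_orderFiltration (c : X →₀ R) :
    Finsupp.linearCombination R (ι R) c ∈ orderFiltration R X 1 :=
  sum_mem fun x _ => Submodule.smul_mem _ _ (ι_mem_orderFiltration x)

theorem linearPart_linearCombination_ι (c : X →₀ R) :
    linearPart R X (Finsupp.linearCombination R (ι R) c) = c := by
  rw [Finsupp.apply_linearCombination]
  simp [Function.comp_def, linearPart_ι, Finsupp.linearCombination_apply]

theorem exists_algEquiv_ι_eq_linearCombination (b : Module.Basis X R (X →₀ R)) :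
    ∃ L : FreeAlgebra R X ≃ₐ[R] FreeAlgebra R X,
      (∀ x, L (ι R x) = Finsupp.linearCombination R (ι R) (b x)) ∧
      ∀ x, L.symm (ι R x) ∈ orderFiltration R X 1 := by
  let b₀ : Module.Basis X R (X →₀ R) := Finsupp.basisSingleOne
  refine ⟨(TensorAlgebra.equivFreeAlgebra b).symm.trans (TensorAlgebra.equivFreeAlgebra b₀),
    fun x => ?_, fun x => ?_⟩
  · rw [AlgEquiv.trans_apply, ← TensorAlgebra.equivFreeAlgebra_ι_apply b x,
      AlgEquiv.symm_apply_apply, equivFreeAlgebra_ι_eq_linearCombination]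
    rfl
  · rw [AlgEquiv.symm_trans_apply, AlgEquiv.symm_symm,
      ← TensorAlgebra.equivFreeAlgebra_ι_apply b₀ x, AlgEquiv.symm_apply_apply,
      equivFreeAlgebra_ι_eq_linearCombination]
    exact linearCombination_ι_mem_orderFiltration _

end LinearChange

theorem exists_isUnipotent_of_linearPart_eq {γ : FreeAlgebra R X ≃ₐ[R] A} {f : X → A}
    (hf : ∀ x, f x ∈ coordinateFiltration γ 1) {b : Module.Basis X R (X →₀ R)}
    (hb : ∀ x, linearPart R X (γ.symm (f x)) = b x) :
    ∃ γ' : FreeAlgebra R X ≃ₐ[R] A, coordinateFiltration γ' = coordinateFiltration γ ∧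
      IsUnipotent ((γ'.symm : A →ₐ[R] _).comp (lift R f)) := by
  obtain ⟨L, hL, hL'⟩ := exists_algEquiv_ι_eq_linearCombination b
  have hL1 (x : X) : L (ι R x) ∈ orderFiltration R X 1 :=
    hL x ▸ linearCombination_ι_mem_orderFiltration _
  refine ⟨L.trans γ, coordinateFiltration_trans hL1 hL' γ, fun x => ?_⟩
  have hsub : γ.symm (f x) - L (ι R x) ∈ orderFiltration R X 2 :=
    mem_orderFiltration_two_of_linearPart_eq_zero (sub_mem (hf x) (hL1 x))
      (by rw [map_sub, hb, hL, linearPart_linearCombination_ι, sub_self])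
  simpa using map_mem_orderFiltration (θ := (L.symm : _ →ₐ[R] _)) hL' hsub

section Grading

variable {G : Type*} [DecidableEq G] {𝒜 : G → Submodule R A} {γ : FreeAlgebra R X ≃ₐ[R] A}

theorem span_linearPart_isHomogeneous_eq_top [Decomposition 𝒜]
    (hγ : SetLike.IsHomogeneous 𝒜 (coordinateFiltration γ 1)) :
    Submodule.span R ((fun a => linearPart R X (γ.symm a)) ''
      {a | (∃ m, a ∈ 𝒜 m) ∧ a ∈ coordinateFiltration γ 1}) = ⊤ := by
  classical
  rw [eq_top_iff, ← (Finsupp.basisSingleOne (R := R) (ι := X)).span_eq, Submodule.span_le]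
  rintro _ ⟨x, rfl⟩
  have hx : γ (ι R x) ∈ coordinateFiltration γ 1 := by
    simpa [mem_coordinateFiltration] using ι_mem_orderFiltration x
  have hsum : linearPart R X (γ.symm (γ (ι R x))) = Finsupp.single x 1 := by
    rw [AlgEquiv.symm_apply_apply, linearPart_ι]
  simp only [Finsupp.coe_basisSingleOne, SetLike.mem_coe]
  rw [← hsum, ← sum_support_decompose 𝒜 (γ (ι R x)), map_sum, map_sum]
  exact sum_mem fun m _ => Submodule.subset_span ⟨_, ⟨⟨m, Subtype.prop _⟩, hγ m hx⟩, rfl⟩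

theorem exists_homogeneous_isUnipotent {K : Type*} [Field K] [Algebra K A]
    {𝒜 : G → Submodule K A} [Decomposition 𝒜] {γ : FreeAlgebra K X ≃ₐ[K] A}
    (hγ : SetLike.IsHomogeneous 𝒜 (coordinateFiltration γ 1)) :
    ∃ (d : X → G) (f : X → A) (γ' : FreeAlgebra K X ≃ₐ[K] A), (∀ x, f x ∈ 𝒜 (d x)) ∧
      coordinateFiltration γ' = coordinateFiltration γ ∧
      IsUnipotent ((γ'.symm : A →ₐ[K] _).comp (lift K f)) := by
  obtain ⟨b, hb⟩ := exists_basis_mem_of_span_eq_top Finsupp.basisSingleOne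
    (span_linearPart_isHomogeneous_eq_top hγ)
  choose f hf hfb using hb
  choose d hd using fun x => (hf x).1
  obtain ⟨γ', hγ', hu⟩ := exists_isUnipotent_of_linearPart_eq (fun x => (hf x).2) hfb
  exact ⟨d, f, γ', hd, hγ', hu⟩

end Grading

end Coordinates

section WordWeight

open DirectSum

variable {R X G A : Type*} [CommRing R] [Ring A] [Algebra R A] [AddCommMonoid G]

variable (R) in
/-- The span of the words of total weight `χ` when the letter `x` has weight `d x`. -/
noncomputable def wordWeightSpace (d : X → G) (χ : G) : Submodule R (FreeAlgebra R X) :=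
  Submodule.span R (basisFreeMonoid R X '' {w | Finsupp.linearCombination ℕ d (letterCount w) = χ})

variable {d : X → G}

theorem exists_disjoint_wordWeightSpace_orderFiltration (hd : LinearIndependent ℕ d) (χ : G) :
    ∃ k, Disjoint (wordWeightSpace R d χ) (orderFiltration R X k) := by
  obtain ⟨k, hk⟩ : ∃ k, ∀ w, Finsupp.linearCombination ℕ d (letterCount w) = χ →
      w.length < k := by
    by_cases h : ∃ w₀, Finsupp.linearCombination ℕ d (letterCount w₀) = χ
    · obtain ⟨w₀, rfl⟩ := h
      refine ⟨w₀.length + 1, fun w hw => ?_⟩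
      rw [← degree_letterCount, hd hw, degree_letterCount]
      exact Nat.lt_succ_self _
    · exact ⟨0, fun w hw => absurd ⟨w, hw⟩ h⟩
  exact ⟨k, (basisFreeMonoid R X).linearIndependent.disjoint_span_image
    (Set.disjoint_left.mpr fun w hw => (hk w hw).not_ge)⟩

variable [DecidableEq G] {𝒜 : G → Submodule R A} [GradedAlgebra 𝒜] {f : X → A}

theorem lift_basisFreeMonoid_mem (hf : ∀ x, f x ∈ 𝒜 (d x)) (w : FreeMonoid X) :
    lift R f (basisFreeMonoid R X w) ∈ 𝒜 (Finsupp.linearCombination ℕ d (letterCount w)) := by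
  induction w using FreeMonoid.inductionOn' with
  | one => simpa [basisFreeMonoid_one] using SetLike.GradedOne.one_mem (A := 𝒜)
  | of_mul x w ih =>
    simpa [basisFreeMonoid_mul, basisFreeMonoid_of] using SetLike.mul_mem_graded (hf x) ih

theorem exists_mem_wordWeightSpace_lift_eq (hf : ∀ x, f x ∈ 𝒜 (d x)) (χ : G)
    (p : FreeAlgebra R X) :
    ∃ q ∈ wordWeightSpace R d χ, lift R f q = decompose 𝒜 (lift R f p) χ := by
  suffices h : (⊤ : Submodule R (FreeAlgebra R X)) ≤ ((wordWeightSpace R d χ).map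
      (lift R f).toLinearMap).comap (GradedAlgebra.proj 𝒜 χ ∘ₗ (lift R f).toLinearMap) from
    h (Submodule.mem_top (x := p))
  rw [← (basisFreeMonoid R X).span_eq, Submodule.span_le]
  rintro _ ⟨w, rfl⟩
  by_cases hχ : Finsupp.linearCombination ℕ d (letterCount w) = χ
  · exact ⟨_, Submodule.subset_span ⟨w, hχ, rfl⟩,
      (decompose_of_mem_same 𝒜 (hχ ▸ lift_basisFreeMonoid_mem hf w)).symm⟩
  · exact ⟨0, zero_mem _, (map_zero _).trans
      (decompose_of_mem_ne 𝒜 (lift_basisFreeMonoid_mem hf w) hχ).symm⟩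

variable {γ : FreeAlgebra R X ≃ₐ[R] A}

theorem exists_mem_wordWeightSpace_sub_lift_mem {k : ℕ}
    (hγ : SetLike.IsHomogeneous 𝒜 (coordinateFiltration γ k)) (hf : ∀ x, f x ∈ 𝒜 (d x))
    (hu : IsUnipotent ((γ.symm : A →ₐ[R] _).comp (lift R f))) {χ : G} {a : A} (ha : a ∈ 𝒜 χ) :
    ∃ p ∈ wordWeightSpace R d χ, a - lift R f p ∈ coordinateFiltration γ k := by
  obtain ⟨p, hp⟩ := hu.exists_sub_map_mem (γ.symm a) k
  obtain ⟨q, hq, hpq⟩ := exists_mem_wordWeightSpace_lift_eq hf χ p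
  refine ⟨q, hq, ?_⟩
  have hap : a - lift R f p ∈ coordinateFiltration γ k := by
    simpa [mem_coordinateFiltration] using hp
  simpa [hpq, decompose_of_mem_same 𝒜 ha] using hγ χ hap

/-- Unipotence approximates a homogeneous element to any order by combinations of words of its
weight. As these all have the same length, the approximations are eventually constant. -/
theorem lift_bijective_of_isUnipotent
    (hγ : ∀ k, SetLike.IsHomogeneous 𝒜 (coordinateFiltration γ k)) (hd : LinearIndependent ℕ d)
    (hf : ∀ x, f x ∈ 𝒜 (d x)) (hu : IsUnipotent ((γ.symm : A →ₐ[R] _).comp (lift R f))) :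
    Function.Bijective (lift R f) := by
  refine ⟨Function.Injective.of_comp hu.injective, fun a => ?_⟩
  induction a using Decomposition.inductionOn 𝒜 with
  | zero => exact ⟨0, map_zero _⟩
  | add a a' ha ha' =>
    obtain ⟨p, rfl⟩ := ha
    obtain ⟨p', rfl⟩ := ha'
    exact ⟨p + p', map_add _ _ _⟩
  | @homogeneous χ a =>
    obtain ⟨l, hdisj⟩ := exists_disjoint_wordWeightSpace_orderFiltration (R := R) hd χ
    obtain ⟨p, hp, hap⟩ := exists_mem_wordWeightSpace_sub_lift_mem (hγ l) hf hu a.2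
    refine ⟨p, (sub_eq_zero.mp (γ.symm.injective ?_)).symm⟩
    rw [map_zero]
    refine eq_zero_of_forall_mem_orderFiltration fun k => ?_
    obtain ⟨q, hq, haq⟩ :=
      exists_mem_wordWeightSpace_sub_lift_mem (hγ (max k l)) hf hu a.2
    have hpq : p - q ∈ orderFiltration R X l := by
      refine hu.mem_of_map_mem ?_
      have := sub_mem (orderFiltration_antitone (le_max_right k l) haq) hap
      simpa using this
    rw [sub_eq_zero.mp (Submodule.disjoint_def.mp hdisj _ (sub_mem hp hq) hpq)]
    exact orderFiltration_antitone (le_max_left _ _) haq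

end WordWeight

section TorusCoordinates

open DirectSum

variable {K X A : Type*} [Field K] [Ring A] [Fintype X] [Algebra K A]
  {ρ : (X → Kˣ) →* (A →ₐ[K] A)} {γ : FreeAlgebra K X ≃ₐ[K] A}

theorem eq_one_of_isUnipotent (hinj : Function.Injective ρ)
    (hρ : ⨆ m, torusWeightSpace ρ m = ⊤) {u : X → Kˣ}
    (hu : IsUnipotent ((γ.symm : A →ₐ[K] _).comp ((ρ u).comp (γ : FreeAlgebra K X →ₐ[K] A)))) :
    u = 1 := by
  refine eq_one_of_forall_mem_torusWeightSpace hinj hρ fun m v hv => γ.symm.injective ?_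
  simpa using hu.map_eq_of_map_eq_smul (v := γ.symm v) (c := torusCharacter m u)
    (by simp [mem_torusWeightSpace.mp hv])

variable [Infinite K]

theorem linearIndependent_weights_of_isUnipotent (hinj : Function.Injective ρ)
    (hρ : ⨆ m, torusWeightSpace ρ m = ⊤)
    (hγ : ∀ t, ∀ a ∈ coordinateFiltration γ 2, ρ t a ∈ coordinateFiltration γ 2)
    {d : X → X → ℤ} {f : X → A} (hf : ∀ x, f x ∈ torusWeightSpace ρ (d x))
    (hu : IsUnipotent ((γ.symm : A →ₐ[K] _).comp (lift K f))) : LinearIndependent ℤ d := by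
  refine linearIndependent_of_torusCharacter_eq_one (K := K) fun u hd =>
    eq_one_of_isUnipotent hinj hρ (γ := γ) fun x => ?_
  have hfix : ρ u (f x) = f x := by rw [mem_torusWeightSpace.mp (hf x), hd, one_smul]
  have hx : f x - γ (ι K x) ∈ coordinateFiltration γ 2 := by
    simpa [mem_coordinateFiltration] using hu x
  simpa [mem_coordinateFiltration, hfix] using sub_mem hx (hγ u _ hx)

theorem exists_algEquiv_ι_mem_torusWeightSpace_of_map_mem (hinj : Function.Injective ρ)
    (hρ : ⨆ m, torusWeightSpace ρ m = ⊤) (γ : FreeAlgebra K X ≃ₐ[K] A)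
    (hγ : ∀ k t, ∀ a ∈ coordinateFiltration γ k, ρ t a ∈ coordinateFiltration γ k) :
    ∃ (d : X → X → ℤ) (β : FreeAlgebra K X ≃ₐ[K] A), ∀ x, β (ι K x) ∈ torusWeightSpace ρ (d x) := by
  let := torusGradedAlgebra hρ
  have hhom (k : ℕ) : SetLike.IsHomogeneous (torusWeightSpace ρ) (coordinateFiltration γ k) :=
    isHomogeneous_of_forall_map_mem (hγ k)
  obtain ⟨d, f, γ', hf, hγ', hu⟩ := exists_homogeneous_isUnipotent (hhom 1)
  rw [← hγ'] at hγ hhom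
  have hd := linearIndependent_weights_of_isUnipotent hinj hρ (hγ 2) hf hu
  refine ⟨d, AlgEquiv.ofBijective (lift K f)
    (lift_bijective_of_isUnipotent hhom (hd.restrict_scalars' ℕ) hf hu), fun x => ?_⟩
  rw [AlgEquiv.ofBijective_apply, lift_ι_apply]
  exact hf x

end TorusCoordinates

section FixedPoint

variable {K X : Type*} [Field K]

/-- The invariant point is `φ₀` composed with the projection to weight zero. The latter is
multiplicative because all units have weight zero, and every nonzero vector of weight zero is a
unit, so that a product of vectors of opposite nonzero weights vanishes. -/
theorem exists_algHom_map_torus_eq [Infinite K] [Fintype X] {A : Type*} [CommRing A] [IsDomain A]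
    [Algebra K A] {τ : (X → Kˣ) →* (A →ₐ[K] A)} (hinj : Function.Injective τ)
    (hτ : ⨆ m, torusWeightSpace τ m = ⊤) (htrdeg : Algebra.trdeg K A ≤ Nat.card X)
    (hunit : ∀ a : A, IsUnit a → a ∈ (algebraMap K A).range) (φ₀ : A →ₐ[K] K) :
    ∃ φ : A →ₐ[K] K, ∀ t a, φ (τ t a) = φ a := by
  let := torusGradedAlgebra hτ
  obtain ⟨d, hd, hd0⟩ := exists_linearIndependent_torusWeightSpace_ne_bot hinj hτ
  have hzero (a : A) (ha : IsUnit a) : a ∈ torusWeightSpace τ 0 := by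
    obtain ⟨c, rfl⟩ := hunit a ha
    exact SetLike.algebraMap_mem_graded (torusWeightSpace τ) c
  obtain ⟨π, hπ⟩ := exists_algHom_apply_eq_coe_decompose_zero (torusWeightSpace τ)
    (fun _ => isUnit_of_mem_zero_of_linearIndependent_degree htrdeg (hd.restrict_scalars' ℕ) hd0)
    hzero
  refine ⟨φ₀.comp π, fun t a => ?_⟩
  simp [hπ, coe_decompose_torus_apply]

theorem abelianize_comp_injective [Fintype X]
    {ρ : (X → Kˣ) →* (FreeAlgebra K X →ₐ[K] FreeAlgebra K X)} (hinj : Function.Injective ρ)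
    (hρ : ⨆ m, torusWeightSpace ρ m = ⊤) : Function.Injective (abelianize.comp ρ) := by
  refine (injective_iff_map_eq_one _).mpr fun u hu =>
    eq_one_of_isUnipotent hinj hρ (γ := AlgEquiv.refl) fun x =>
      sub_mem_orderFiltration_two_of_toMvPolynomial_eq ?_
  have := abelianize_toMvPolynomial (ρ u) (ι K x)
  rw [MonoidHom.comp_apply] at hu
  simpa [hu] using this.symm

theorem exists_algHom_map_torus_freeAlgebra_eq [Infinite K] [Fintype X]
    {ρ : (X → Kˣ) →* (FreeAlgebra K X →ₐ[K] FreeAlgebra K X)} (hinj : Function.Injective ρ)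
    (hρ : ⨆ m, torusWeightSpace ρ m = ⊤) :
    ∃ ε : FreeAlgebra K X →ₐ[K] K, ∀ t v, ε (ρ t v) = ε v := by
  have hτ : ⨆ m, torusWeightSpace (abelianize.comp ρ) m = ⊤ :=
    iSup_torusWeightSpace_eq_top_of_surjective toMvPolynomial_surjective
      (fun t v => (abelianize_toMvPolynomial (ρ t) v).symm) hρ
  have htrdeg : Algebra.trdeg K (MvPolynomial X K) ≤ Nat.card X := by
    simp [MvPolynomial.trdeg_of_isDomain]
  have hunit (p : MvPolynomial X K) (hp : IsUnit p) : p ∈ (algebraMap K _).range := by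
    obtain ⟨c, -, rfl⟩ := MvPolynomial.isUnit_iff_eq_C_of_isReduced.mp hp
    exact ⟨c, rfl⟩
  obtain ⟨φ, hφ⟩ := exists_algHom_map_torus_eq (abelianize_comp_injective hinj hρ) hτ htrdeg hunit
    (MvPolynomial.aeval 0)
  refine ⟨φ.comp (toMvPolynomial K X), fun t v => ?_⟩
  rw [AlgHom.comp_apply, ← abelianize_toMvPolynomial]
  exact hφ t _

theorem exists_algEquiv_ι_mem_torusWeightSpace [Infinite K] [Fintype X]
    {ρ : (X → Kˣ) →* (FreeAlgebra K X →ₐ[K] FreeAlgebra K X)} (hinj : Function.Injective ρ)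
    (hρ : ⨆ m, torusWeightSpace ρ m = ⊤) :
    ∃ (d : X → X → ℤ) (β : FreeAlgebra K X ≃ₐ[K] FreeAlgebra K X),
      ∀ x, β (ι K x) ∈ torusWeightSpace ρ (d x) := by
  obtain ⟨ε, hε⟩ := exists_algHom_map_torus_freeAlgebra_eq hinj hρ
  obtain ⟨γ, hγ⟩ := exists_algEquiv_algebraMapInv_symm_eq ε
  refine exists_algEquiv_ι_mem_torusWeightSpace_of_map_mem hinj hρ γ fun _ t _ =>
    map_mem_coordinateFiltration fun a => ?_
  rw [hγ, hγ, hε]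

end FixedPoint

theorem TorusActionIsRegular.iSup_torusWeightSpace_eq_top {K : Type} [Field K] [Infinite K]
    {n r : ℕ} {σ : (Fin r → Kˣ) →* (FreeAlgebra K (Fin n) ≃ₐ[K] FreeAlgebra K (Fin n))}
    (hσ : TorusActionIsRegular σ) :
    ⨆ m, torusWeightSpace ((AlgEquiv.toAlgHomHom K _).comp σ) m = ⊤ := by
  refine iSup_torusWeightSpace_eq_top_of_adjoin (adjoin_range_ι K (Fin n)) ?_
  rintro _ ⟨i, rfl⟩
  obtain ⟨a, ha⟩ := hσ i
  exact mem_iSup_torusWeightSpace ha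

theorem TorusActionIsLinearizable.of_mem_torusWeightSpace {K : Type} [Field K] {n r : ℕ}
    {σ : (Fin r → Kˣ) →* (FreeAlgebra K (Fin n) ≃ₐ[K] FreeAlgebra K (Fin n))}
    (β : FreeAlgebra K (Fin n) ≃ₐ[K] FreeAlgebra K (Fin n)) {d : Fin n → Fin r → ℤ}
    (hβ : ∀ i, β (ι K i) ∈ torusWeightSpace ((AlgEquiv.toAlgHomHom K _).comp σ) (d i)) :
    TorusActionIsLinearizable σ := by
  refine ⟨β, fun t i => ?_⟩
  have hσ : σ t (β (ι K i)) = torusCharacter (d i) t • β (ι K i) := mem_torusWeightSpace.mp (hβ i) t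
  rw [hσ, map_smul, AlgEquiv.symm_apply_apply]
  exact Submodule.smul_mem _ _ (Submodule.subset_span ⟨i, rfl⟩)

theorem maximal_torus_action_linearizable_general {K : Type} [Field K] [Infinite K] {n : ℕ}
    (σ : (Fin n → Kˣ) →* (FreeAlgebra K (Fin n) ≃ₐ[K] FreeAlgebra K (Fin n)))
    (hreg : TorusActionIsRegular σ) (heff : Function.Injective σ) :
    TorusActionIsLinearizable σ := by
  have hinj : Function.Injective ((AlgEquiv.toAlgHomHom K _).comp σ) :=
    AlgEquiv.coe_toAlgHom_injective.comp heff
  obtain ⟨d, β, hβ⟩ :=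
    exists_algEquiv_ι_mem_torusWeightSpace hinj hreg.iSup_torusWeightSpace_eq_top
  exact .of_mem_torusWeightSpace β hβ

/-- Free algebra analogue of the Białynicki-Birula theorem: every effective regular action of
the `n`-dimensional torus on the free associative algebra on `n` generators is linearizable. -/
theorem maximal_torus_action_linearizable
    {K : Type} [Field K] [IsAlgClosed K] {n : ℕ} (hn : 1 ≤ n)
    (σ : (Fin n → Kˣ) →* (FreeAlgebra K (Fin n) ≃ₐ[K] FreeAlgebra K (Fin n)))
    (hreg : TorusActionIsRegular σ)
    (heff : Function.Injective σ) :
    TorusActionIsLinearizable σ :=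
  maximal_torus_action_linearizable_general σ hreg heff
end

section
/- Let K be an algebraically closed field, n ≥ 1, and let σ be a regular action of the n-dimensional torus T_n = (K^×)^n on F_n = FreeAlgebra K (Fin n). Then the induced action on affine n-space has a fixed point: there exist constants c_1, …, c_n ∈ K such that for every t ∈ (Kˣ)^n and every i, the K-algebra homomorphism ev_c : F_n → K determined by z_j ↦ c_j satisfies ev_c(σ(t)(z_i)) = c_i. Consequently, after the translation of generators z_i ↦ z_i − c_i, the images σ(t)(z_i) have zero constant term. -/
open FreeAlgebra

/-!
Comparing coefficients of characters turns the action into a system of polynomial identities for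
the Laurent coefficients of the `σ t z_i`, and the fixed points are the common zeros of the
coefficients of nonzero weight.  Following Serre, if these had no common zero then, by the
Nullstellensatz, they would generate the unit ideal; a certificate for this and the identities
make sense over a finitely generated subring of `K`, hence over a residue field of it, which is
finite.  After adjoining `l`-th roots of unity for a large prime `l`, the `l`-torsion of the torus
is an `l`-group acting on the finite set `kⁿ`, whose cardinality is prime to `l`.  It has a fixed
point, and since `l` exceeds all the weights every coefficient of nonzero weight vanishes there, a
contradiction.
-/

open MvPolynomial
open scoped AddMonoidAlgebra

section FiniteFields

theorem isJacobsonRing_int : IsJacobsonRing ℤ := by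
  refine isJacobsonRing_iff_prime_eq.2 fun P hP => ?_
  rcases eq_or_ne P ⊥ with rfl | hP0
  · refine le_antisymm (fun x hx => ?_) Ideal.le_jacobson
    have hunit : IsUnit (x * x + 1) := Ideal.mem_jacobson_bot.1 hx x
    have hsq : x * x = 0 := by
      have := mul_self_nonneg x
      rcases Int.isUnit_iff.1 hunit with h | h <;> linarith
    exact mul_self_eq_zero.1 hsq
  · have := hP.isMaximal hP0
    exact Ideal.jacobson_eq_self_of_isMaximal

theorem finite_of_finiteType_int (k : Type*) [Field k] [Algebra ℤ k]
    [Algebra.FiniteType ℤ k] : Finite k := by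
  obtain rfl : ‹Algebra ℤ k› = Ring.toIntAlgebra k := Subsingleton.elim _ _
  have := isJacobsonRing_int
  have : Module.Finite ℤ k := finite_of_finite_type_of_isJacobsonRing ℤ k
  obtain ⟨p, hp⟩ := CharP.exists k
  rcases CharP.char_is_prime_or_zero k p with hprime | rfl
  · have : Fact p.Prime := ⟨hprime⟩
    let _ := ZMod.algebra k p
    have : Module.Finite (ZMod p) k := Module.Finite.of_restrictScalars_finite ℤ (ZMod p) k
    exact Module.finite_of_finite (ZMod p)
  · have := CharP.charP_to_charZero k
    exact absurd (isField_of_isIntegral_of_isField (algebraMap ℤ k).injective_int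
      (Field.toIsField k)) Int.not_isField

theorem exists_prime_gt_isPrimitiveRoot_cyclotomicField (F : Type*) [Field F] [Finite F] (N : ℕ) :
    ∃ l, N < l ∧ l.Prime ∧ Finite (CyclotomicField l F) ∧
      ∃ ζ : (CyclotomicField l F)ˣ, IsPrimitiveRoot ζ l := by
  obtain ⟨p, hp⟩ := CharP.exists F
  obtain ⟨l, hNpl, hl⟩ := Nat.exists_infinite_primes (N + p + 1)
  have hpl : ¬ p ∣ l := fun hd =>
    absurd ((Nat.prime_dvd_prime_iff_eq (CharP.char_is_prime F p) hl).1 hd) (by lia)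
  have : NeZero l := ⟨hl.ne_zero⟩
  have : NeZero (l : F) := ⟨fun h => hpl ((CharP.cast_eq_zero_iff F p l).1 h)⟩
  have := IsCyclotomicExtension.finite_of_singleton l F (CyclotomicField l F)
  obtain ⟨ζ, hζ⟩ := IsCyclotomicExtension.exists_isPrimitiveRoot F (CyclotomicField l F)
    (Set.mem_singleton l) hl.ne_zero
  exact ⟨l, by lia, hl, Module.finite_of_finite F,
    (hζ.isUnit hl.ne_zero).unit, hζ.isUnit_unit hl.ne_zero⟩

theorem not_dvd_natCard_of_isPrimitiveRoot {k : Type*} [Field k] [Finite k] {l : ℕ}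
    (hl : l.Prime) {ζ : kˣ} (hζ : IsPrimitiveRoot ζ l) : ¬ l ∣ Nat.card k := by
  have hdvd : l ∣ Nat.card k - 1 := by
    rw [← Nat.card_units, hζ.eq_orderOf]
    exact orderOf_dvd_natCard ζ
  exact fun h => hl.not_dvd_one ((Nat.dvd_sub_iff_right Nat.card_pos h).1 hdvd)

end FiniteFields

section Torus

/-- The point `t` of the split torus `G ^ κ`, viewed as a homomorphism from the character lattice
`κ → ℤ` to `G`, where the character `m` takes the value `∏ j, t j ^ m j` at `t`. -/
def torusPoint (κ G : Type*) [Fintype κ] [CommGroup G] :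
    (κ → G) →* (Multiplicative (κ → ℤ) →* G) where
  toFun t :=
    { toFun := fun m => ∏ j, t j ^ m.toAdd j
      map_one' := by simp
      map_mul' := fun a b => by simp [zpow_add, Finset.prod_mul_distrib] }
  map_one' := by ext; simp
  map_mul' s t := by ext; simp [mul_zpow, Finset.prod_mul_distrib]

theorem torusPoint_mulSingle {κ G : Type*} [Fintype κ] [DecidableEq κ] [CommGroup G] (j : κ)
    (u : G) (m : κ → ℤ) : torusPoint κ G (Pi.mulSingle j u) (.ofAdd m) = u ^ m j := by
  refine (Finset.prod_eq_single j (fun i _ hij => ?_) (by simp)).trans (by simp)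
  simp [Pi.mulSingle_eq_of_ne hij]

theorem exists_units_zpow_ne_one_s1 (K : Type*) [Field K] [Infinite K] {e : ℤ} (he : e ≠ 0) :
    ∃ u : Kˣ, u ^ e ≠ 1 := by
  by_contra! h
  have : NeZero e.natAbs := ⟨Int.natAbs_ne_zero.2 he⟩
  have htop : rootsOfUnity e.natAbs K = ⊤ :=
    eq_top_iff.2 fun u _ => pow_natAbs_eq_one.2 (h u)
  have : Finite (rootsOfUnity e.natAbs K) := inferInstance
  rw [htop] at this
  have : Finite Kˣ := Finite.of_equiv _ Subgroup.topEquiv.toEquiv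
  classical
  have : Finite (WithZero Kˣ) := inferInstanceAs (Finite (Option Kˣ))
  have : Finite K := Finite.of_equiv _ (WithZero.withZeroUnitsEquiv : WithZero Kˣ ≃* K).toEquiv
  exact not_finite K

theorem torusPoint_flip_injective (κ K : Type*) [Fintype κ] [Field K] [Infinite K] :
    Function.Injective (torusPoint κ Kˣ).flip := by
  classical
  refine (injective_iff_map_eq_one _).2 fun m hm => ?_
  refine Multiplicative.toAdd.injective (funext fun j => ?_)
  by_contra hj
  obtain ⟨u, hu⟩ := exists_units_zpow_ne_one_s1 K hj
  exact hu ((torusPoint_mulSingle j u m.toAdd).symm.trans (DFunLike.congr_fun hm _))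

theorem linearIndependent_torusPoint (κ K : Type*) [Fintype κ] [Field K] [Infinite K] :
    LinearIndependent K fun (m : κ → ℤ) (t : κ → Kˣ) => (torusPoint κ Kˣ t (.ofAdd m) : K) := by
  let χ (m : κ → ℤ) : (κ → Kˣ) →* K :=
    (Units.coeHom K).comp ((torusPoint κ Kˣ).flip (.ofAdd m))
  have hχ : Function.Injective χ := fun m m' hm =>
    Multiplicative.ofAdd.injective <| torusPoint_flip_injective κ K <|
      MonoidHom.ext fun t => Units.ext (DFunLike.congr_fun hm t)
  exact (linearIndependent_monoidHom (κ → Kˣ) K).comp χ hχ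

theorem eq_of_forall_sum_mul_torusPoint_eq {κ K : Type*} [Fintype κ] [Field K] [Infinite K]
    {s : Finset (κ → ℤ)} {a b : (κ → ℤ) → K}
    (h : ∀ t : κ → Kˣ, ∑ m ∈ s, a m * torusPoint κ Kˣ t (.ofAdd m) =
      ∑ m ∈ s, b m * torusPoint κ Kˣ t (.ofAdd m)) : ∀ m ∈ s, a m = b m :=
  linearIndependent_iff'ₛ.1 (linearIndependent_torusPoint κ K) s a b <| funext fun t => by
    simpa only [Finset.sum_apply, Pi.smul_apply, smul_eq_mul] using h t

end Torus
section Coaction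

variable {R S σ M : Type*} [CommRing R] [CommRing S] [AddCommMonoid M]

/-- The family `A` of elements of `R[x][M]` gives the coordinates of an action on affine space of
the diagonalizable group with character monoid `M`: the coefficient of `A i` at `m` is the part of
weight `m` of the `i`-th coordinate of the orbit map.  The two fields are the counit and the
coassociativity axioms, the latter compared coefficientwise.  Phrasing them as polynomial identities
makes them stable under extension of scalars. -/
structure IsDiagonalizableAction (A : σ → (MvPolynomial σ R)[M]) : Prop where
  sum_coeff : ∀ i, ((A i).coeff.sum fun _ p => p) = X i
  aeval_coeff : ∀ i m, aeval A ((A i).coeff m) = AddMonoidAlgebra.single m ((A i).coeff m)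

/-- The ideal generated by the coefficients of nonzero weight, which cuts out the fixed-point
scheme of the action. -/
noncomputable def movingIdeal (A : σ → (MvPolynomial σ R)[M]) : Ideal (MvPolynomial σ R) :=
  Ideal.span {p | ∃ i m, m ≠ 0 ∧ (A i).coeff m = p}

theorem coeff_mem_movingIdeal (A : σ → (MvPolynomial σ R)[M]) (i : σ) {m : M} (hm : m ≠ 0) :
    (A i).coeff m ∈ movingIdeal A :=
  Ideal.subset_span ⟨i, m, hm, rfl⟩

theorem movingIdeal_ne_top_of_eval [Nontrivial R] {A : σ → (MvPolynomial σ R)[M]} {c : σ → R}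
    (hc : ∀ i m, m ≠ 0 → eval c ((A i).coeff m) = 0) : movingIdeal A ≠ ⊤ := by
  have hle : movingIdeal A ≤ RingHom.ker (eval c) :=
    Ideal.span_le.2 (by rintro _ ⟨i, m, hm, rfl⟩; exact hc i m hm)
  exact ne_top_of_le_ne_top (RingHom.ker_ne_top _) hle

/-- Extension of scalars along `f` of the coordinates of an action. -/
noncomputable def coactionMap (f : R →+* S) (A : σ → (MvPolynomial σ R)[M]) (i : σ) :
    (MvPolynomial σ S)[M] :=
  AddMonoidAlgebra.mapRingHom M (map f) (A i)

theorem coeff_coactionMap (f : R →+* S) (A : σ → (MvPolynomial σ R)[M]) (i : σ) (m : M) :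
    (coactionMap f A i).coeff m = map f ((A i).coeff m) :=
  AddMonoidAlgebra.coeff_mapRingHom ..

theorem sum_coeff_coactionMap (f : R →+* S) (A : σ → (MvPolynomial σ R)[M]) (i : σ) :
    ((coactionMap f A i).coeff.sum fun _ p => p) = map f ((A i).coeff.sum fun _ p => p) := by
  rw [map_finsuppSum]
  exact Finsupp.sum_mapRange_index (hf := map_zero _) fun _ => rfl

theorem aeval_coactionMap (f : R →+* S) (A : σ → (MvPolynomial σ R)[M])
    (p : MvPolynomial σ R) :
    aeval (coactionMap f A) (map f p) = AddMonoidAlgebra.mapRingHom M (map f) (aeval A p) := by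
  induction p using MvPolynomial.induction_on with
  | C a => simp
  | add p q hp hq => simp only [map_add, hp, hq]
  | mul_X p i hp => simp only [map_mul, hp, map_X, aeval_X, coactionMap]

theorem movingIdeal_coactionMap (f : R →+* S) (A : σ → (MvPolynomial σ R)[M]) :
    movingIdeal (coactionMap f A) = (movingIdeal A).map (map f) := by
  rw [movingIdeal, movingIdeal, Ideal.map_span]
  congr 1
  ext p
  constructor
  · rintro ⟨i, m, hm, rfl⟩
    exact ⟨_, ⟨i, m, hm, rfl⟩, (coeff_coactionMap ..).symm⟩
  · rintro ⟨_, ⟨i, m, hm, rfl⟩, rfl⟩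
    exact ⟨i, m, hm, coeff_coactionMap ..⟩

theorem movingIdeal_ne_top_of_coactionMap (f : R →+* S) {A : σ → (MvPolynomial σ R)[M]}
    (h : movingIdeal (coactionMap f A) ≠ ⊤) : movingIdeal A ≠ ⊤ := fun htop =>
  h (by rw [movingIdeal_coactionMap, htop, Ideal.map_top])

theorem exists_coactionMap_eq {f : R →+* S} {A : σ → (MvPolynomial σ S)[M]}
    (hA : ∀ i m, (A i).coeff m ∈ Set.range (map (σ := σ) f)) : ∃ A', coactionMap f A' = A := by
  have hrange (i : σ) :
      A i ∈ Set.range (AddMonoidAlgebra.map (M := M) (map (σ := σ) f).toAddMonoidHom) := by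
    rw [AddMonoidAlgebra.range_map]
    exact hA i
  choose A' hA' using hrange
  exact ⟨A', funext hA'⟩

/-- Evaluation of a function on the product of a diagonalizable group and affine space at the
point `(t, c)`; a point of the group is a homomorphism on its characters. -/
noncomputable def evalPoint (t : Multiplicative M →* Rˣ) (c : σ → R) :
    (MvPolynomial σ R)[M] →ₐ[R] R :=
  (AddMonoidAlgebra.lift R R M ((Units.coeHom R).comp t)).comp
    (AddMonoidAlgebra.mapAlgHom M (aeval c))

theorem evalPoint_single (t : Multiplicative M →* Rˣ) (c : σ → R) (m : M)
    (p : MvPolynomial σ R) :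
    evalPoint t c (AddMonoidAlgebra.single m p) = eval c p * t (.ofAdd m) := by
  simp [evalPoint, aeval_eq_eval]

theorem evalPoint_apply (t : Multiplicative M →* Rˣ) (c : σ → R) (f : (MvPolynomial σ R)[M]) :
    evalPoint t c f = ∑ m ∈ f.coeff.support, eval c (f.coeff m) * t (.ofAdd m) := by
  conv_lhs => rw [← AddMonoidAlgebra.sum_coeff_single f]
  rw [map_finsuppSum]
  exact Finset.sum_congr rfl fun m _ => evalPoint_single ..

/-- The image of the point `c` of affine space under the group element `t`, for the action with
coordinates `A`. -/
noncomputable def actOn (A : σ → (MvPolynomial σ R)[M]) (t : Multiplicative M →* Rˣ)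
    (c : σ → R) (i : σ) : R :=
  evalPoint t c (A i)

theorem evalPoint_aeval (A : σ → (MvPolynomial σ R)[M]) (t : Multiplicative M →* Rˣ)
    (c : σ → R) (p : MvPolynomial σ R) :
    evalPoint t c (aeval A p) = eval (actOn A t c) p := by
  rw [← AlgHom.comp_apply, comp_aeval, ← aeval_eq_eval]
  rfl

namespace IsDiagonalizableAction

variable {A : σ → (MvPolynomial σ R)[M]}

theorem baseChange (h : IsDiagonalizableAction A) (f : R →+* S) :
    IsDiagonalizableAction (coactionMap f A) where
  sum_coeff i := by rw [sum_coeff_coactionMap, h.sum_coeff, map_X]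
  aeval_coeff i m := by
    rw [coeff_coactionMap, aeval_coactionMap, h.aeval_coeff, AddMonoidAlgebra.mapRingHom_single]

theorem of_baseChange {f : R →+* S} (hf : Function.Injective f)
    (h : IsDiagonalizableAction (coactionMap f A)) : IsDiagonalizableAction A where
  sum_coeff i := map_injective f hf (by rw [← sum_coeff_coactionMap, h.sum_coeff, map_X])
  aeval_coeff i m := by
    refine AddMonoidAlgebra.map_injective (M := M) (map f).toAddMonoidHom (map_injective f hf) ?_
    change AddMonoidAlgebra.mapRingHom M (map f) _ = AddMonoidAlgebra.mapRingHom M (map f) _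
    rw [← aeval_coactionMap, ← coeff_coactionMap, h.aeval_coeff, coeff_coactionMap,
      AddMonoidAlgebra.mapRingHom_single]

theorem eval_actOn_coeff (h : IsDiagonalizableAction A) (t : Multiplicative M →* Rˣ)
    (c : σ → R) (i : σ) (m : M) :
    eval (actOn A t c) ((A i).coeff m) = eval c ((A i).coeff m) * t (.ofAdd m) := by
  rw [← evalPoint_aeval, h.aeval_coeff, evalPoint_single]

theorem actOn_one (h : IsDiagonalizableAction A) (c : σ → R) : actOn A 1 c = c := by
  funext i
  have hsum := congrArg (eval c) (h.sum_coeff i)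
  rw [map_finsuppSum, eval_X] at hsum
  simpa [actOn, evalPoint_apply, Finsupp.sum] using hsum

theorem actOn_mul (h : IsDiagonalizableAction A) (s t : Multiplicative M →* Rˣ) (c : σ → R) :
    actOn A (s * t) c = actOn A s (actOn A t c) := by
  funext i
  refine (evalPoint_apply ..).trans (.trans ?_ (evalPoint_apply ..).symm)
  refine Finset.sum_congr rfl fun m _ => ?_
  rw [h.eval_actOn_coeff, MonoidHom.mul_apply, Units.val_mul]
  ring

/-- The action of the points of the diagonalizable group on the points of affine space. -/
@[reducible] noncomputable def mulAction (h : IsDiagonalizableAction A) :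
    MulAction (Multiplicative M →* Rˣ) (σ → R) where
  smul := actOn A
  one_smul := h.actOn_one
  mul_smul := h.actOn_mul

theorem eval_coeff_eq_zero_of_actOn_eq_self [NoZeroDivisors R] (h : IsDiagonalizableAction A)
    {t : Multiplicative M →* Rˣ} {c : σ → R} (hc : actOn A t c = c) {m : M}
    (ht : t (.ofAdd m) ≠ 1) (i : σ) : eval c ((A i).coeff m) = 0 := by
  have hweight := h.eval_actOn_coeff t c i m
  rw [hc, eq_comm] at hweight
  by_contra hne
  exact ht (Units.ext ((mul_eq_left₀ hne).1 hweight))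

theorem actOn_eq_self_of_movingIdeal (h : IsDiagonalizableAction A) {c : σ → R}
    (hc : ∀ p ∈ movingIdeal A, eval c p = 0) (t : Multiplicative M →* Rˣ) :
    actOn A t c = c := by
  conv_rhs => rw [← h.actOn_one c]
  funext i
  refine (evalPoint_apply ..).trans (.trans ?_ (evalPoint_apply ..).symm)
  refine Finset.sum_congr rfl fun m _ => ?_
  rcases eq_or_ne m 0 with rfl | hm
  · rw [ofAdd_zero, map_one, map_one]
  · rw [hc _ (coeff_mem_movingIdeal A i hm), zero_mul, zero_mul]

theorem exists_forall_pow_eq_one_actOn_eq_self [Finite R] [Finite σ]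
    (h : IsDiagonalizableAction A) {l : ℕ} (hl : l.Prime) (hlR : ¬ l ∣ Nat.card R) :
    ∃ c : σ → R, ∀ t : Multiplicative M →* Rˣ, t ^ l = 1 → actOn A t c = c := by
  have : Fact l.Prime := ⟨hl⟩
  let _ := h.mulAction
  let H : Subgroup (Multiplicative M →* Rˣ) := (powMonoidHom l).ker
  have hH : IsPGroup l H := fun t => ⟨1, Subtype.ext (by rw [pow_one]; exact t.2)⟩
  have hcard : ¬ l ∣ Nat.card (σ → R) := by
    rw [Nat.card_fun]
    exact fun hd => hlR (hl.dvd_of_dvd_pow hd)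
  obtain ⟨c, hc⟩ := hH.nonempty_fixed_point_of_prime_not_dvd_card (σ → R) hcard
  exact ⟨c, fun t ht => hc ⟨t, ht⟩⟩

end IsDiagonalizableAction

end Coaction

section FixedPoints

variable {R σ κ : Type*} [CommRing R] [Finite σ] [Finite κ]

theorem exists_forall_abs_lt_of_mem_support {P : Type*} [Zero P] (f : σ → (κ → ℤ) →₀ P) :
    ∃ N : ℕ, ∀ i, ∀ m ∈ (f i).support, ∀ j, |m j| < N := by
  have : ∀ᶠ N : ℕ in Filter.atTop, ∀ i, ∀ m ∈ (f i).support, ∀ j, |m j| < N := by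
    simp only [Filter.eventually_all, Filter.eventually_all_finset]
    exact fun i m _ j => tendsto_natCast_atTop_atTop.eventually_gt_atTop |m j|
  exact this.exists

theorem exists_fg_subalgebra_forall_mem_range_map {k τ : Type*} [CommRing k] [Algebra k R]
    {T : Set (MvPolynomial τ R)} (hT : T.Finite) :
    ∃ B : Subalgebra k R, B.FG ∧ ∀ p ∈ T, p ∈ Set.range (map (σ := τ) (algebraMap B R)) := by
  refine ⟨Algebra.adjoin k (⋃ p ∈ T, (p.coeffs : Set R)), ?_, fun p hp => ?_⟩
  · exact Subalgebra.fg_def.2 ⟨_, hT.biUnion fun p _ => p.coeffs.finite_toSet, rfl⟩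
  · refine mem_range_map_iff_coeffs_subset.2 fun a ha => ?_
    exact ⟨⟨a, Algebra.subset_adjoin (Set.mem_biUnion hp ha)⟩, rfl⟩

namespace IsDiagonalizableAction

theorem movingIdeal_ne_top_of_isPrimitiveRoot {k : Type*} [Field k] [Finite k]
    {A : σ → (MvPolynomial σ k)[κ → ℤ]} (h : IsDiagonalizableAction A) {l : ℕ} (hl : l.Prime)
    {ζ : kˣ} (hζ : IsPrimitiveRoot ζ l) (hA : ∀ i, ∀ m ∈ (A i).coeff.support, ∀ j, |m j| < l) :
    movingIdeal A ≠ ⊤ := by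
  classical
  have := Fintype.ofFinite κ
  obtain ⟨c, hc⟩ := h.exists_forall_pow_eq_one_actOn_eq_self hl
    (not_dvd_natCard_of_isPrimitiveRoot hl hζ)
  refine movingIdeal_ne_top_of_eval (c := c) fun i m hm => ?_
  by_cases hmA : m ∈ (A i).coeff.support
  · obtain ⟨j, hj⟩ := Function.ne_iff.1 hm
    have htorsion : torusPoint κ kˣ (Pi.mulSingle j ζ) ^ l = 1 := by
      rw [← map_pow, ← Pi.mulSingle_pow, hζ.pow_eq_one, Pi.mulSingle_one, map_one]
    refine h.eval_coeff_eq_zero_of_actOn_eq_self (hc _ htorsion) ?_ i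
    rw [torusPoint_mulSingle, Ne, hζ.zpow_eq_one_iff_dvd]
    exact fun hdvd => hj (Int.eq_zero_of_abs_lt_dvd hdvd (hA i m hmA j))
  · rw [Finsupp.notMem_support_iff.1 hmA, map_zero]

theorem movingIdeal_ne_top_of_finite {F : Type*} [Field F] [Finite F]
    {A : σ → (MvPolynomial σ F)[κ → ℤ]} (h : IsDiagonalizableAction A) : movingIdeal A ≠ ⊤ := by
  obtain ⟨N, hN⟩ := exists_forall_abs_lt_of_mem_support fun i => (A i).coeff
  obtain ⟨l, hNl, hl, hfin, ζ, hζ⟩ := exists_prime_gt_isPrimitiveRoot_cyclotomicField F N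
  let f := algebraMap F (CyclotomicField l F)
  refine movingIdeal_ne_top_of_coactionMap f <|
    (h.baseChange f).movingIdeal_ne_top_of_isPrimitiveRoot hl hζ fun i m hm j => ?_
  have hmA : m ∈ (A i).coeff.support := Finsupp.support_mapRange (hf := map_zero _) hm
  exact (hN i m hmA j).trans (by exact_mod_cast hNl)

theorem movingIdeal_ne_top_of_finiteType [Nontrivial R] [Algebra ℤ R] [Algebra.FiniteType ℤ R]
    {A : σ → (MvPolynomial σ R)[κ → ℤ]} (h : IsDiagonalizableAction A) : movingIdeal A ≠ ⊤ := by
  obtain ⟨P, hP⟩ := Ideal.exists_maximal R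
  let _ : Field (R ⧸ P) := Ideal.Quotient.field P
  have : Finite (R ⧸ P) := finite_of_finiteType_int (R ⧸ P)
  exact movingIdeal_ne_top_of_coactionMap (Ideal.Quotient.mk P)
    (h.baseChange (Ideal.Quotient.mk P)).movingIdeal_ne_top_of_finite

theorem exists_fg_descent {M : Type*} [AddCommMonoid M] {A : σ → (MvPolynomial σ R)[M]}
    (h : IsDiagonalizableAction A) (htop : movingIdeal A = ⊤) :
    ∃ B : Subalgebra ℤ R, B.FG ∧ ∃ A' : σ → (MvPolynomial σ B)[M],
      IsDiagonalizableAction A' ∧ movingIdeal A' = ⊤ := by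
  obtain ⟨b, T, hT, -, hb⟩ := Submodule.mem_span_iff_exists_finset_subset.1
    ((Ideal.eq_top_iff_one _).1 htop)
  obtain ⟨B, hB, hlift⟩ := exists_fg_subalgebra_forall_mem_range_map (k := ℤ)
    ((Set.finite_iUnion fun i => (A i).coeff.finite_range).union (T.finite_toSet.image b))
  obtain ⟨A', rfl⟩ : ∃ A', coactionMap (algebraMap B R) A' = A :=
    exists_coactionMap_eq fun i m => hlift _ (.inl (Set.mem_iUnion.2 ⟨i, m, rfl⟩))
  have hgen : ∀ p ∈ T, ∃ q ∈ movingIdeal A', map (algebraMap B R) q = p := by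
    intro p hp
    obtain ⟨i, m, hm, rfl⟩ := hT hp
    exact ⟨_, coeff_mem_movingIdeal A' i hm, (coeff_coactionMap ..).symm⟩
  choose! b' hb' using fun p (hp : p ∈ T) => hlift (b p) (.inr ⟨p, hp, rfl⟩)
  choose! q hq hqp using hgen
  have hone : ∑ p ∈ T, b' p * q p = 1 := by
    refine map_injective (algebraMap B R) Subtype.val_injective ?_
    rw [map_sum, map_one, ← hb]
    refine Finset.sum_congr rfl fun p hp => ?_
    rw [map_mul, hb' p hp, hqp p hp, smul_eq_mul]
  refine ⟨B, hB, A', h.of_baseChange Subtype.val_injective, (Ideal.eq_top_iff_one _).2 ?_⟩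
  rw [← hone]
  exact Ideal.sum_mem _ fun p hp => Ideal.mul_mem_left _ _ (hq p hp)

theorem movingIdeal_ne_top [Nontrivial R] {A : σ → (MvPolynomial σ R)[κ → ℤ]}
    (h : IsDiagonalizableAction A) : movingIdeal A ≠ ⊤ := by
  intro htop
  obtain ⟨B, hB, A', hA', htop'⟩ := h.exists_fg_descent htop
  have := (Subalgebra.fg_iff_finiteType B).1 hB
  exact hA'.movingIdeal_ne_top_of_finiteType htop'

theorem exists_forall_actOn_eq_self {K : Type*} [Field K] [IsAlgClosed K]
    {A : σ → (MvPolynomial σ K)[κ → ℤ]} (h : IsDiagonalizableAction A) :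
    ∃ c : σ → K, ∀ t, actOn A t c = c := by
  obtain ⟨P, hP, hle⟩ := Ideal.exists_le_maximal _ h.movingIdeal_ne_top
  obtain ⟨c, rfl⟩ := eq_vanishingIdeal_singleton_of_isMaximal K hP
  exact ⟨c, h.actOn_eq_self_of_movingIdeal fun p hp =>
    (mem_vanishingIdeal_singleton_iff c p).1 (hle hp)⟩

end IsDiagonalizableAction

end FixedPoints

section Density

variable {σ κ K : Type*} [Fintype κ] [Field K] [Infinite K]

theorem eq_zero_of_forall_evalPoint_torusPoint {f : (MvPolynomial σ K)[κ → ℤ]}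
    (h : ∀ t c, evalPoint (torusPoint κ Kˣ t) c f = 0) : f = 0 := by
  refine AddMonoidAlgebra.coeff_eq_zero.1 (Finsupp.ext fun m => ?_)
  by_contra hm
  refine hm (MvPolynomial.funext fun c => ?_)
  rw [Finsupp.zero_apply, map_zero]
  refine linearIndependent_iff'.1 (linearIndependent_torusPoint κ K) f.coeff.support
    (fun m => eval c (f.coeff m)) (funext fun t => ?_) m (Finsupp.mem_support_iff.2 hm)
  rw [Finset.sum_apply]
  exact (evalPoint_apply ..).symm.trans (h t c)

theorem isDiagonalizableAction_of_forall_torusPoint {A : σ → (MvPolynomial σ K)[κ → ℤ]}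
    (hone : ∀ c, actOn A 1 c = c)
    (hmul : ∀ s t c, actOn A (torusPoint κ Kˣ (s * t)) c =
      actOn A (torusPoint κ Kˣ s) (actOn A (torusPoint κ Kˣ t) c)) :
    IsDiagonalizableAction A where
  sum_coeff i := MvPolynomial.funext fun c => by
    rw [map_finsuppSum, eval_X, ← congrFun (hone c) i, actOn, evalPoint_apply]
    simp only [MonoidHom.one_apply, Units.val_one, mul_one, Finsupp.sum]
  aeval_coeff i m := by
    refine sub_eq_zero.1 (eq_zero_of_forall_evalPoint_torusPoint fun t c => ?_)
    rw [map_sub, sub_eq_zero, evalPoint_aeval, evalPoint_single]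
    by_cases hm : m ∈ (A i).coeff.support
    · refine eq_of_forall_sum_mul_torusPoint_eq (s := (A i).coeff.support)
        (a := fun m => eval (actOn A (torusPoint κ Kˣ t) c) ((A i).coeff m))
        (b := fun m => eval c ((A i).coeff m) * torusPoint κ Kˣ t (.ofAdd m)) (fun s => ?_) m hm
      have hst := congrFun (hmul s t c) i
      rw [map_mul, actOn, actOn, evalPoint_apply, evalPoint_apply] at hst
      refine hst.symm.trans (Finset.sum_congr rfl fun m _ => ?_)
      rw [MonoidHom.mul_apply, Units.val_mul]
      ring
    · simp only [Finsupp.notMem_support_iff.1 hm, map_zero, zero_mul]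

end Density

section FreeAlgebra

theorem eval_freeAlgebraLift_X {R α : Type*} [CommSemiring R] (c : α → R) (x : FreeAlgebra R α) :
    eval c (FreeAlgebra.lift R X x) = FreeAlgebra.lift R c x := by
  have : (aeval c).comp (FreeAlgebra.lift R (X : α → MvPolynomial α R)) = FreeAlgebra.lift R c :=
    FreeAlgebra.hom_ext (funext fun i => by simp)
  rw [← this, AlgHom.comp_apply, aeval_eq_eval]

theorem lift_zero_translation_symm_apply {R α : Type*} [CommRing R] {c : α → R}
    {φ : FreeAlgebra R α →ₐ[R] FreeAlgebra R α}
    (hφ : ∀ i, FreeAlgebra.lift R c (φ (ι R i)) = c i) {τ : FreeAlgebra R α ≃ₐ[R] FreeAlgebra R α}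
    (hτ : ∀ i, τ (ι R i) = ι R i - algebraMap R (FreeAlgebra R α) (c i)) (i : α) :
    FreeAlgebra.lift R (0 : α → R) (τ.symm (φ (τ (ι R i)))) = 0 := by
  have hlift : (FreeAlgebra.lift R (0 : α → R)).comp τ.symm.toAlgHom = FreeAlgebra.lift R c := by
    have hι (j : α) : τ.symm (ι R j) = ι R j + algebraMap R _ (c j) := by
      rw [AlgEquiv.symm_apply_eq, map_add, hτ, AlgEquiv.commutes, sub_add_cancel]
    exact FreeAlgebra.hom_ext (funext fun j => by simp [hι])
  refine (DFunLike.congr_fun hlift (φ (τ (ι R i)))).trans ?_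
  rw [hτ, map_sub, map_sub, hφ, AlgHom.commutes, AlgHom.commutes]
  exact sub_self _

namespace TorusActionIsRegular

variable {K : Type} [Field K] {n r : ℕ}
  {σ : (Fin r → Kˣ) →* (FreeAlgebra K (Fin n) ≃ₐ[K] FreeAlgebra K (Fin n))}

theorem exists_lift_eq_actOn (hσ : TorusActionIsRegular σ) :
    ∃ A : Fin n → (MvPolynomial (Fin n) K)[Fin r → ℤ], ∀ t c i,
      FreeAlgebra.lift K c (σ t (ι K i)) = actOn A (torusPoint (Fin r) Kˣ t) c i := by
  choose a ha using hσ
  refine ⟨fun i => (a i).sum fun m x => .single m (FreeAlgebra.lift K X x), fun t c i => ?_⟩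
  rw [ha, map_finsuppSum, actOn, map_finsuppSum]
  refine Finsupp.sum_congr fun m _ => ?_
  rw [map_smul, smul_eq_mul, evalPoint_single, eval_freeAlgebraLift_X, mul_comm]
  rfl

theorem exists_fixed_point [IsAlgClosed K] (hσ : TorusActionIsRegular σ) :
    ∃ c : Fin n → K, ∀ t i, FreeAlgebra.lift K c (σ t (ι K i)) = c i := by
  obtain ⟨A, hA⟩ := hσ.exists_lift_eq_actOn
  have hlift (t : Fin r → Kˣ) (c : Fin n → K) (x : FreeAlgebra K (Fin n)) :
      FreeAlgebra.lift K c (σ t x) =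
        FreeAlgebra.lift K (actOn A (torusPoint (Fin r) Kˣ t) c) x := by
    refine DFunLike.congr_fun (f := (FreeAlgebra.lift K c).comp (σ t).toAlgHom) ?_ x
    exact FreeAlgebra.hom_ext (funext fun i => (hA t c i).trans (lift_ι_apply _ i).symm)
  have hact : IsDiagonalizableAction A := by
    refine isDiagonalizableAction_of_forall_torusPoint (fun c => funext fun i => ?_)
      fun s t c => funext fun i => ?_
    · rw [← map_one (torusPoint (Fin r) Kˣ), ← hA, map_one, AlgEquiv.one_apply, lift_ι_apply]
    · rw [← hA, ← hA, mul_comm, map_mul, AlgEquiv.mul_apply, hlift]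
  obtain ⟨c, hc⟩ := hact.exists_forall_actOn_eq_self
  exact ⟨c, fun t i => by rw [hA, hc]⟩

end TorusActionIsRegular

end FreeAlgebra

theorem torus_action_fixed_point_general {K : Type} [Field K] [IsAlgClosed K] {n r : ℕ}
    (σ : (Fin r → Kˣ) →* (FreeAlgebra K (Fin n) ≃ₐ[K] FreeAlgebra K (Fin n)))
    (hreg : TorusActionIsRegular σ) :
    ∃ c : Fin n → K,
      (∀ (t : Fin r → Kˣ) (i : Fin n),
        FreeAlgebra.lift K c (σ t (ι K i)) = c i) ∧
      (∀ τ : FreeAlgebra K (Fin n) ≃ₐ[K] FreeAlgebra K (Fin n),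
        (∀ i : Fin n, τ (ι K i) = ι K i - algebraMap K (FreeAlgebra K (Fin n)) (c i)) →
        ∀ (t : Fin r → Kˣ) (i : Fin n),
          FreeAlgebra.lift K (fun _ : Fin n => (0 : K)) (τ.symm (σ t (τ (ι K i)))) = 0) := by
  obtain ⟨c, hc⟩ := hreg.exists_fixed_point
  exact ⟨c, hc, fun τ hτ t => lift_zero_translation_symm_apply (φ := (σ t).toAlgHom) (hc t) hτ⟩

/-- Any regular action of the `n`-torus on the free algebra on `n` generators has a fixed point
`c = (c_1, …, c_n)`: evaluating `σ(t)(z_i)` at `z_j ↦ c_j` gives back `c_i`.  Consequently,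
after the translation of generators `z_i ↦ z_i − c_i` the images of the generators have zero
constant term. -/
theorem torus_action_fixed_point
    {K : Type} [Field K] [IsAlgClosed K] {n : ℕ} (hn : 1 ≤ n)
    (σ : (Fin n → Kˣ) →* (FreeAlgebra K (Fin n) ≃ₐ[K] FreeAlgebra K (Fin n)))
    (hreg : TorusActionIsRegular σ) :
    ∃ c : Fin n → K,
      (∀ (t : Fin n → Kˣ) (i : Fin n),
        FreeAlgebra.lift K c (σ t (ι K i)) = c i) ∧
      (∀ τ : FreeAlgebra K (Fin n) ≃ₐ[K] FreeAlgebra K (Fin n),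
        (∀ i : Fin n, τ (ι K i) = ι K i - algebraMap K (FreeAlgebra K (Fin n)) (c i)) →
        ∀ (t : Fin n → Kˣ) (i : Fin n),
          FreeAlgebra.lift K (fun _ : Fin n => (0 : K)) (τ.symm (σ t (τ (ι K i)))) = 0) :=
  torus_action_fixed_point_general σ hreg
end
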